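/- Let m ≥ 0 be an integer. For every G ∈ A²_{(2m−1/2,2m−1/2)}(Π⁺×Π⁺) there exists F ∈ H²(T_Σ) such that (□^m F)(z₁, z₂, 0) = G(z₁,z₂) for all (z₁,z₂) ∈ Π⁺×Π⁺, and moreover ‖F‖²_{H²(T_Σ)} = c_m ‖G‖²_{A²_{(2m−1/2,2m−1/2)}(Π⁺×Π⁺)} for a constant c_m > 0 depending only on m. -/

import Mathlib

open MeasureTheory Set
open scoped ENNReal NNReal

noncomputable section

/-- The spherical cone `Σ = {y ∈ ℝ³ : y₁y₂ − y₃² > 0, y₁ > 0}`. -/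
def Sigma3 : Set (Fin 3 → ℝ) :=
  {y | 0 < y 0 * y 1 - (y 2) ^ 2 ∧ 0 < y 0}

/-- The tube domain `T_Σ = ℝ³ + iΣ ⊂ ℂ³`. -/
def TSigma : Set (Fin 3 → ℂ) :=
  {z | (fun i => (z i).im) ∈ Sigma3}

/-- Square of the Hardy space `H²(T_Σ)` norm. -/
def hardyNormSqSigma (F : (Fin 3 → ℂ) → ℂ) : ℝ≥0∞ :=
  ⨆ y ∈ Sigma3,
    ∫⁻ x : Fin 3 → ℝ, (‖F (fun i => (x i : ℂ) + (y i : ℂ) * Complex.I)‖₊ : ℝ≥0∞) ^ 2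

/-- Partial derivative in the `i`-th complex coordinate. -/
def pd (i : Fin 3) (F : (Fin 3 → ℂ) → ℂ) : (Fin 3 → ℂ) → ℂ :=
  fun z => fderiv ℂ F z (Pi.single i 1)

/-- The box operator `□ = −4 ∂²/∂z₁∂z₂ + ∂²/∂z₃²` associated to the spherical cone. -/
def BoxS (F : (Fin 3 → ℂ) → ℂ) : (Fin 3 → ℂ) → ℂ :=
  fun z => -4 * pd 0 (pd 1 F) z + pd 2 (pd 2 F) z

/-- The upper half-plane `Π⁺`. -/
def UHP : Set ℂ := {z : ℂ | 0 < z.im}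

/-- The weighted measure `dV_α(x+iy) = y^α dx dy` on the upper half-plane. -/
def Vm (α : ℝ) : Measure ℂ :=
  (volume.restrict UHP).withDensity fun z => ENNReal.ofReal (z.im ^ α)

/-- Square of the weighted Bergman space `A²_{(α₁,α₂)}(Π⁺×Π⁺)` norm:
`‖G‖² = ∫_{Π⁺×Π⁺} |G(x₁+iy₁,x₂+iy₂)|² y₁^{α₁} y₂^{α₂} dx₁dx₂dy₁dy₂`. -/
def bergNormSqProd (α₁ α₂ : ℝ) (G : ℂ × ℂ → ℂ) : ℝ≥0∞ :=
  ∫⁻ z, (‖G z‖₊ : ℝ≥0∞) ^ 2 ∂((Vm α₁).prod (Vm α₂))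

section Plancherel

open FourierTransform SchwartzMap
open scoped ContDiff

theorem plancherel_L1_L2 {E : Type*} [NormedAddCommGroup E] [InnerProductSpace ℝ E]
    [FiniteDimensional ℝ E] [MeasurableSpace E] [BorelSpace E] (f : E → ℂ)
    (h1 : Integrable f) (h2 : MemLp f 2) :
    ∫⁻ ξ, (‖𝓕 f ξ‖ₑ) ^ 2 = ∫⁻ x, (‖f x‖ₑ) ^ 2 := by
  set g : Lp (α := E) ℂ 2 (volume : Measure E) := 𝓕 (h2.toLp f) with hg
  have hcont : Continuous (𝓕 f) :=
    VectorFourier.fourierIntegral_continuous (μ := volume) Real.continuous_fourierChar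
      (innerSL ℝ).continuous₂ h1
  have key : (g : E → ℂ) =ᵐ[volume] 𝓕 f := by
    apply ae_eq_of_integral_contDiff_smul_eq
    · exact (Lp.memLp g).locallyIntegrable (by norm_num)
    · exact hcont.locallyIntegrable
    · intro φ φ_smooth φ_cpt
      have hg₁ : HasCompactSupport (Complex.ofRealCLM ∘ φ) := φ_cpt.comp_left rfl
      have hg₂ : ContDiff ℝ ∞ (Complex.ofRealCLM ∘ φ) := by fun_prop
      set Φ : 𝓢(E, ℂ) := hg₁.toSchwartzMap hg₂ with hΦ
      have e1 : Lp.toTemperedDistribution (μ := volume) g Φ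
          = Lp.toTemperedDistribution (μ := volume) (h2.toLp f) (𝓕 Φ) := by
        rw [hg, ← Lp.fourier_toTemperedDistribution_eq, TemperedDistribution.fourier_apply]
      rw [Lp.toTemperedDistribution_apply, Lp.toTemperedDistribution_apply] at e1
      have e2 : ∫ x, (𝓕 Φ) x • (h2.toLp f : E → ℂ) x = ∫ x, (𝓕 (Φ : E → ℂ)) x • f x := by
        apply integral_congr_ae
        filter_upwards [h2.coeFn_toLp] with x hx
        rw [hx, SchwartzMap.fourier_coe]
      have e3 : ∫ x, (𝓕 (Φ : E → ℂ)) x • f x = ∫ x, Φ x • 𝓕 f x := by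
        have := VectorFourier.integral_fourierIntegral_smul_eq_flip (μ := volume) (ν := volume)
          (e := Real.fourierChar) (L := innerₗ E)
          (f := (Φ : E → ℂ)) (g := f) Real.continuous_fourierChar
          (by exact continuous_inner) Φ.integrable h1
        rw [flip_innerₗ] at this
        exact this
      have e4 := e1.trans (e2.trans e3)
      have e5 : ∀ x, Φ x = (φ x : ℂ) := fun x => rfl
      simp only [e5] at e4
      simpa using e4
  have hn : ‖g‖ = ‖h2.toLp f‖ := Lp.norm_fourier_eq _
  have hn' : eLpNorm g 2 volume = eLpNorm f 2 volume := by
    rw [← eLpNorm_congr_ae h2.coeFn_toLp]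
    rw [Lp.norm_def, Lp.norm_def] at hn
    exact (ENNReal.toReal_eq_toReal_iff' (Lp.eLpNorm_ne_top _) (Lp.eLpNorm_ne_top _)).1 hn
  rw [eLpNorm_congr_ae key] at hn'
  have h3 : ∀ u : E → ℂ, ∫⁻ x, (‖u x‖ₑ) ^ 2 = (eLpNorm u 2 volume) ^ 2 := by
    intro u
    have := eLpNorm_nnreal_pow_eq_lintegral (μ := volume) (f := u) (p := 2) (by norm_num)
    simp only [NNReal.coe_ofNat, ENNReal.rpow_ofNat] at this
    exact this.symm
  rw [h3, h3, hn']

end Plancherel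
section Abstract

theorem hilbert_transfer {ι H A : Type*} [NormedAddCommGroup H] [InnerProductSpace ℂ H]
    [CompleteSpace H] [NormedAddCommGroup A] [InnerProductSpace ℂ A]
    (e : ι → H) (k : ι → A) (κ : ℝ) (hκ : 0 < κ)
    (hek : ∀ p q, inner ℂ (e p) (e q) = (κ : ℂ) * inner ℂ (k p) (k q))
    (G : A) (hG : G ∈ closure (Submodule.span ℂ (Set.range k) : Set A)) :
    ∃ f : H, ‖f‖ ^ 2 = κ * ‖G‖ ^ 2 ∧ ∀ p, inner ℂ (e p) f = (κ : ℂ) * inner ℂ (k p) G := by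
  set E := Finsupp.linearCombination ℂ e with hE
  set K := Finsupp.linearCombination ℂ k with hK
  have h1 : ∀ p b, inner ℂ (e p) (E b) = (κ : ℂ) * inner ℂ (k p) (K b) := by
    intro p b
    simp only [hE, hK, Finsupp.linearCombination_apply, Finsupp.sum, inner_sum, inner_smul_right,
      hek, Finset.mul_sum]
    refine Finset.sum_congr rfl fun i _ => by ring
  have h2 : ∀ a b, inner ℂ (E a) (E b) = (κ : ℂ) * inner ℂ (K a) (K b) := by
    intro a b
    have : ∀ x : H, inner ℂ (E a) x = ∑ i ∈ a.support, (starRingEnd ℂ) (a i) * inner ℂ (e i) x := by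
      intro x
      simp only [hE, Finsupp.linearCombination_apply, Finsupp.sum, sum_inner, inner_smul_left]
    rw [this]
    have : ∀ x : A, inner ℂ (K a) x = ∑ i ∈ a.support, (starRingEnd ℂ) (a i) * inner ℂ (k i) x := by
      intro x
      simp only [hK, Finsupp.linearCombination_apply, Finsupp.sum, sum_inner, inner_smul_left]
    rw [this]
    simp only [h1, Finset.mul_sum]
    refine Finset.sum_congr rfl fun i _ => by ring
  have h3 : ∀ a, ‖E a‖ = Real.sqrt κ * ‖K a‖ := by
    intro a
    have h4 : ‖E a‖ ^ 2 = κ * ‖K a‖ ^ 2 := by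
      rw [← inner_self_eq_norm_sq (𝕜 := ℂ), ← inner_self_eq_norm_sq (𝕜 := ℂ), h2 a a]
      simp
    rw [← Real.sqrt_sq (norm_nonneg (E a)), h4, Real.sqrt_mul hκ.le,
      Real.sqrt_sq (norm_nonneg _)]
  obtain ⟨u, hu, hlim⟩ := mem_closure_iff_seq_limit.1 hG
  have hr : ∀ n, ∃ a, K a = u n := by
    intro n
    have := hu n
    rw [SetLike.mem_coe, ← Finsupp.range_linearCombination] at this
    exact this
  choose a ha using hr
  have hcau : CauchySeq fun n => E (a n) := by
    have hc := hlim.cauchySeq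
    rw [Metric.cauchySeq_iff] at hc ⊢
    intro ε hε
    have hs : 0 < Real.sqrt κ := Real.sqrt_pos.2 hκ
    obtain ⟨N, hN⟩ := hc (ε / Real.sqrt κ) (by positivity)
    refine ⟨N, fun m hm n hn => ?_⟩
    have := hN m hm n hn
    rw [dist_eq_norm, ← ha, ← ha, ← map_sub, lt_div_iff₀ hs] at this
    rw [dist_eq_norm, ← map_sub, h3]
    linarith
  obtain ⟨f, hf⟩ := cauchySeq_tendsto_of_complete hcau
  have hlim' : Filter.Tendsto (fun n => K (a n)) Filter.atTop (nhds G) := by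
    simpa only [ha] using hlim
  refine ⟨f, ?_, fun p => ?_⟩
  · have t1 := hf.norm
    have t2 := (hlim'.norm).const_mul (Real.sqrt κ)
    simp only [h3] at t1
    have := tendsto_nhds_unique t1 t2
    rw [this, mul_pow, Real.sq_sqrt hκ.le]
  · have t1 : Filter.Tendsto (fun n => inner ℂ (e p) (E (a n))) Filter.atTop
        (nhds (inner ℂ (e p) f)) := Filter.Tendsto.inner tendsto_const_nhds hf
    have t2 : Filter.Tendsto (fun n => (κ : ℂ) * inner ℂ (k p) (K (a n))) Filter.atTop
        (nhds ((κ : ℂ) * inner ℂ (k p) G)) :=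
      (Filter.Tendsto.inner tendsto_const_nhds hlim').const_mul _
    simp only [h1] at t1
    exact tendsto_nhds_unique t1 t2

/-- reproducing kernels are total. -/
theorem mem_closure_of_reproducing {X : Type*} [MeasurableSpace X] (μ : Measure X)
    (S : Set X) (hS : ∀ᵐ x ∂μ, x ∈ S)
    (k : S → Lp ℂ 2 μ) (C : ℝ) (hC : 0 < C)
    (hk : ∀ q : S, ∀ᵐ x ∂μ, ∀ hx : x ∈ S, inner ℂ (k ⟨x, hx⟩) (k q) = (C : ℂ) * k q x)
    (G : Lp ℂ 2 μ)
    (hG : ∀ᵐ x ∂μ, ∀ hx : x ∈ S, inner ℂ (k ⟨x, hx⟩) G = (C : ℂ) * G x) :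
    G ∈ closure (Submodule.span ℂ (Set.range k) : Set (Lp ℂ 2 μ)) := by
  set V := (Submodule.span ℂ (Set.range k)).topologicalClosure with hV
  -- the elements of the span have the reproducing property
  have hspan : ∀ h ∈ Submodule.span ℂ (Set.range k),
      ∀ᵐ x ∂μ, ∀ hx : x ∈ S, inner ℂ (k ⟨x, hx⟩) h = (C : ℂ) * h x := by
    intro h hh
    induction hh using Submodule.span_induction with
    | mem x hx => obtain ⟨q, rfl⟩ := hx; exact hk q
    | zero =>
      filter_upwards [Lp.coeFn_zero ℂ 2 μ] with x hx _
      rw [hx]; simp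
    | add u v _ _ hu hv =>
      filter_upwards [hu, hv, Lp.coeFn_add u v] with x h1 h2 h3 hx
      rw [inner_add_right, h1 hx, h2 hx, h3, Pi.add_apply, mul_add]
    | smul c u _ hu =>
      filter_upwards [hu, Lp.coeFn_smul c u] with x h1 h3 hx
      rw [inner_smul_right, h1 hx, h3, Pi.smul_apply, smul_eq_mul]; ring
  have hclos : ∀ h ∈ V, ∀ᵐ x ∂μ, ∀ hx : x ∈ S, inner ℂ (k ⟨x, hx⟩) h = (C : ℂ) * h x := by
    intro h hh
    have hh' : h ∈ closure (Submodule.span ℂ (Set.range k) : Set (Lp ℂ 2 μ)) := hh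
    obtain ⟨u, hu, hlim⟩ := mem_closure_iff_seq_limit.1 hh'
    have hm : TendstoInMeasure μ (fun n => (u n : X → ℂ)) Filter.atTop h :=
      tendstoInMeasure_of_tendsto_Lp hlim
    obtain ⟨ns, hns, hae⟩ := hm.exists_seq_tendsto_ae
    have hall : ∀ᵐ x ∂μ, ∀ n, ∀ hx : x ∈ S, inner ℂ (k ⟨x, hx⟩) (u n) = (C : ℂ) * u n x :=
      ae_all_iff.2 fun n => hspan _ (hu n)
    filter_upwards [hae, hall] with x h1 h2 hx
    have t1 : Filter.Tendsto (fun i => inner ℂ (k ⟨x, hx⟩) (u (ns i))) Filter.atTop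
        (nhds (inner ℂ (k ⟨x, hx⟩) h)) :=
      Filter.Tendsto.inner tendsto_const_nhds (hlim.comp hns.tendsto_atTop)
    have t2 := h1.const_mul (C : ℂ)
    simp only [h2 _ hx] at t1
    exact tendsto_nhds_unique t1 t2
  have : CompleteSpace V := (Submodule.isClosed_topologicalClosure _).completeSpace_coe
  set P : Lp ℂ 2 μ := V.starProjection G with hP
  have hPV : P ∈ V := Submodule.starProjection_apply_mem V G
  have hperp : ∀ q, inner ℂ (k q) P = inner ℂ (k q) G := by
    intro q
    have hq : k q ∈ V := Submodule.le_topologicalClosure _ (Submodule.subset_span ⟨q, rfl⟩)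
    have := Submodule.sub_starProjection_mem_orthogonal (K := V) G
    have := (Submodule.mem_orthogonal V _).1 this _ hq
    rw [inner_sub_right, sub_eq_zero] at this
    exact this.symm
  have : P = G := by
    apply Lp.ext
    filter_upwards [hclos P hPV, hG, hS] with x h1 h2 hx
    have := h1 hx
    rw [hperp, h2 hx] at this
    exact (mul_left_cancel₀ (by exact_mod_cast hC.ne') this).symm
  rw [← this]
  exact hPV

end Abstract
section Disk

open Metric

theorem disk_weight_integrable {α : ℝ} (hα : -1 / 2 ≤ α) :
    IntegrableOn (fun ζ : ℂ => (1 - ‖ζ‖ ^ 2) ^ α) (ball 0 1) := by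
  set f : ℝ → ℝ := (Set.Iio 1).indicator fun r => (1 - r ^ 2) ^ α with hf
  have h0 : (ball (0:ℂ) 1).indicator (fun ζ : ℂ => (1 - ‖ζ‖ ^ 2) ^ α) = fun ζ => f ‖ζ‖ := by
    funext ζ
    by_cases h : ‖ζ‖ < 1
    · simp [hf, h, Set.indicator]
    · simp [hf, h, Set.indicator]
  rw [← integrable_indicator_iff measurableSet_ball, h0]
  rw [integrable_fun_norm_addHaar volume (f := f)]
  simp only [Complex.finrank_real_complex, Nat.add_one_sub_one, pow_one, smul_eq_mul]
  have h1 : IntervalIntegrable (fun x : ℝ => (1 - x) ^ (-1/2 : ℝ)) volume 0 1 := by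
    have := (intervalIntegral.intervalIntegrable_rpow' (a := 0) (b := 1)
      (r := (-1/2 : ℝ)) (by norm_num)).comp_sub_left 1
    simpa using this.symm
  rw [intervalIntegrable_iff_integrableOn_Ioo_of_le zero_le_one] at h1
  have h2 : IntegrableOn (fun y : ℝ => y * f y) (Set.Ioo 0 1) := by
    refine Integrable.mono' h1 ?_ ?_
    · refine Measurable.aestronglyMeasurable ?_
      refine measurable_id.mul (Measurable.indicator ?_ measurableSet_Iio)
      fun_prop
    · refine (ae_restrict_iff' measurableSet_Ioo).2 (Filter.Eventually.of_forall fun x hx => ?_)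
      have hx0 : 0 < x := hx.1
      have hx1 : x < 1 := hx.2
      have hp : 0 < 1 - x ^ 2 := by nlinarith
      have hfx : f x = (1 - x ^ 2) ^ α := by simp [hf, hx1]
      rw [hfx, Real.norm_of_nonneg (by positivity)]
      calc x * (1 - x ^ 2) ^ α ≤ 1 * (1 - x ^ 2) ^ α := by gcongr
        _ = (1 - x ^ 2) ^ α := one_mul _
        _ ≤ (1 - x ^ 2) ^ (-1/2 : ℝ) :=
          Real.rpow_le_rpow_of_exponent_ge hp (by nlinarith) hα
        _ ≤ (1 - x) ^ (-1/2 : ℝ) :=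
          Real.rpow_le_rpow_of_nonpos (by linarith) (by nlinarith) (by norm_num)
  have h3 : IntegrableOn (fun y : ℝ => y * f y) (Set.Ici 1) := by
    refine (integrableOn_congr_fun (g := fun _ => (0:ℝ)) ?_ measurableSet_Ici).2 integrableOn_zero
    intro x hx
    have : ¬ x < 1 := not_lt.2 hx
    simp [hf, this]
  have := h2.union h3
  rwa [Set.Ioo_union_Ici_eq_Ioi zero_lt_one] at this

theorem disk_weight_pos {α : ℝ} (hα : -1 / 2 ≤ α) :
    0 < ∫ ζ in ball (0:ℂ) 1, (1 - ‖ζ‖ ^ 2) ^ α := by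
  rw [setIntegral_pos_iff_support_of_nonneg_ae _ (disk_weight_integrable hα)]
  · have : ball (0:ℂ) 1 ⊆ (Function.support fun ζ : ℂ => (1 - ‖ζ‖ ^ 2) ^ α) ∩ ball 0 1 := by
      intro ζ hζ
      refine ⟨?_, hζ⟩
      have : ‖ζ‖ < 1 := by simpa using hζ
      have hp : 0 < 1 - ‖ζ‖ ^ 2 := by nlinarith [norm_nonneg ζ]
      exact (Real.rpow_pos_of_pos hp _).ne'
    exact lt_of_lt_of_le (measure_ball_pos volume 0 one_pos) (measure_mono this)
  · refine (ae_restrict_iff' measurableSet_ball).2 (Filter.Eventually.of_forall fun ζ hζ => ?_)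
    have : ‖ζ‖ < 1 := by simpa using hζ
    have hp : 0 < 1 - ‖ζ‖ ^ 2 := by nlinarith [norm_nonneg ζ]
    exact (Real.rpow_pos_of_pos hp _).le

theorem disk_mean {α : ℝ} (h : ℂ → ℂ) (hd : DifferentiableOn ℂ h (ball 0 1))
    (hi : IntegrableOn (fun ζ : ℂ => ((1 - ‖ζ‖ ^ 2) ^ α : ℝ) * h ζ) (ball 0 1)) :
    ∫ ζ in ball (0:ℂ) 1, ((1 - ‖ζ‖ ^ 2) ^ α : ℝ) * h ζ =
      ((∫ ζ in ball (0:ℂ) 1, (1 - ‖ζ‖ ^ 2) ^ α : ℝ) : ℂ) * h 0 := by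
  set f : ℂ → ℂ := (ball (0:ℂ) 1).indicator fun ζ => ((1 - ‖ζ‖ ^ 2) ^ α : ℝ) * h ζ with hf
  have hfi : Integrable f := (integrable_indicator_iff measurableSet_ball).2 hi
  have hcont : ContinuousOn (fun ζ : ℂ => (((1 - ‖ζ‖ ^ 2) ^ α : ℝ) : ℂ) * h ζ) (ball 0 1) := by
    refine ContinuousOn.mul ?_ hd.continuousOn
    refine Complex.continuous_ofReal.comp_continuousOn ?_
    refine ContinuousOn.rpow_const (by fun_prop) fun ζ hζ => Or.inl ?_
    have : ‖ζ‖ < 1 := by simpa using hζ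
    have hp : 0 < 1 - ‖ζ‖ ^ 2 := by nlinarith [norm_nonneg ζ]
    exact hp.ne'
  have hfm : Measurable f := by
    classical
    have := hcont.measurable_piecewise (g := (0 : ℂ → ℂ)) continuousOn_const
      measurableSet_ball
    rwa [Set.piecewise_eq_indicator] at this
  have hrot : ∀ θ : ℝ, MeasurePreserving (fun ζ : ℂ => Complex.exp (θ * Complex.I) * ζ) := by
    intro θ
    have := (rotation (Circle.exp θ)).measurePreserving
    simpa [rotation_apply] using! this
  have hemb : ∀ θ : ℝ, MeasurableEmbedding (fun ζ : ℂ => Complex.exp (θ * Complex.I) * ζ) := by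
    intro θ
    exact (Homeomorph.mulLeft₀ _ (Complex.exp_ne_zero _)).measurableEmbedding
  have hprod : Integrable (fun p : ℝ × ℂ => f (Complex.exp (p.1 * Complex.I) * p.2))
      ((volume.restrict (Set.Ioc 0 (2 * Real.pi))).prod volume) := by
    have hm : Measurable (fun p : ℝ × ℂ => f (Complex.exp (p.1 * Complex.I) * p.2)) :=
      hfm.comp (by fun_prop)
    rw [integrable_prod_iff hm.aestronglyMeasurable]
    constructor
    · refine Filter.Eventually.of_forall fun θ => ?_
      exact ((hrot θ).integrable_comp_emb (hemb θ)).2 hfi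
    · have : ∀ θ : ℝ, ∫ y : ℂ, ‖f (Complex.exp (θ * Complex.I) * y)‖ = ∫ y, ‖f y‖ :=
        fun θ => (hrot θ).integral_comp (hemb θ) (fun z => ‖f z‖)
      simp only [this]
      exact integrable_const _
  have hsw := integral_integral_swap (f := fun (θ : ℝ) (ζ : ℂ) =>
    f (Complex.exp (θ * Complex.I) * ζ)) hprod
  have hL : ∀ θ : ℝ, ∫ y : ℂ, f (Complex.exp (θ * Complex.I) * y) = ∫ y, f y :=
    fun θ => (hrot θ).integral_comp (hemb θ) f
  simp only [hL] at hsw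
  have hR : ∀ ζ : ℂ, ∫ θ in Set.Ioc 0 (2 * Real.pi), f (Complex.exp (θ * Complex.I) * ζ)
      = (ball (0:ℂ) 1).indicator
        (fun ζ => ((2 * Real.pi : ℝ) : ℂ) * h 0 * ((1 - ‖ζ‖ ^ 2) ^ α : ℝ)) ζ := by
    intro ζ
    have hn : ∀ θ : ℝ, ‖Complex.exp (θ * Complex.I) * ζ‖ = ‖ζ‖ := by
      intro θ; rw [norm_mul, Complex.norm_exp_ofReal_mul_I, one_mul]
    by_cases hζ : ‖ζ‖ < 1
    · have hζ' : ζ ∈ ball (0:ℂ) 1 := by simpa using hζ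
      have hζ2 : ∀ θ : ℝ, Complex.exp (θ * Complex.I) * ζ ∈ ball (0:ℂ) 1 := by
        intro θ; rw [mem_ball_zero_iff, hn]; exact hζ
      simp only [hf, Set.indicator_of_mem (hζ2 _), Set.indicator_of_mem hζ', hn]
      rw [integral_const_mul]
      have hav := (DiffContOnCl.circleAverage (f := fun l : ℂ => h (l * ζ)) (c := 0) (R := 1) ?_)
      · rw [Real.circleAverage_def, intervalIntegral.integral_of_le (by positivity)] at hav
        simp only [circleMap, zero_add, Complex.ofReal_one, one_mul, zero_mul] at hav
        rw [← hav]
        rw [Complex.real_smul, Complex.ofReal_inv, mul_inv_cancel_left₀, mul_comm]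
        · exact_mod_cast (by positivity : (2 * Real.pi : ℝ) ≠ 0)
      · apply DifferentiableOn.diffContOnCl
        rw [abs_one, closure_ball _ one_ne_zero]
        refine hd.comp (by fun_prop) fun l hl => ?_
        have hl' : ‖l‖ ≤ 1 := by simpa using hl
        rw [mem_ball_zero_iff, norm_mul]
        nlinarith [norm_nonneg ζ, norm_nonneg l]
    · have hζ' : ζ ∉ ball (0:ℂ) 1 := by simpa using hζ
      have hζ2 : ∀ θ : ℝ, Complex.exp (θ * Complex.I) * ζ ∉ ball (0:ℂ) 1 := by
        intro θ; rw [mem_ball_zero_iff, hn]; exact hζ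
      simp only [hf, Set.indicator_of_notMem (hζ2 _), Set.indicator_of_notMem hζ']
      simp
  simp only [hR] at hsw
  rw [setIntegral_const, hf, integral_indicator measurableSet_ball,
    integral_indicator measurableSet_ball, integral_const_mul, integral_complex_ofReal] at hsw
  have hpi : ((2 * Real.pi : ℝ) : ℂ) ≠ 0 := by
    exact_mod_cast (by positivity : (2 * Real.pi : ℝ) ≠ 0)
  apply mul_left_cancel₀ hpi
  have hv : (volume : Measure ℝ).real (Set.Ioc 0 (2 * Real.pi)) = 2 * Real.pi := by
    rw [Real.volume_real_Ioc_of_le (by positivity)]; ring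
  rw [hv, Complex.real_smul] at hsw
  rw [hsw]; ring

end Disk
section Cayley

open Metric

/-- the Cayley map of the disk onto the upper half plane sending `0` to `w` -/
def cay (w ζ : ℂ) : ℂ := (w - (starRingEnd ℂ) w * ζ) / (1 - ζ)

/-- the one-variable kernel -/
def kf (s : ℝ) (w z : ℂ) : ℂ := (-Complex.I * (z - (starRingEnd ℂ) w)) ^ (-(s : ℂ))

theorem one_sub_ne {ζ : ℂ} (h : ζ ∈ ball (0:ℂ) 1) : 1 - ζ ≠ 0 := by
  intro h0
  have : ζ = 1 := by linear_combination -h0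
  simp [this] at h

theorem one_sub_re_pos {ζ : ℂ} (h : ζ ∈ ball (0:ℂ) 1) : 0 < (1 - ζ).re := by
  have h1 : ‖ζ‖ < 1 := by simpa using h
  have := Complex.re_le_norm ζ
  simp; linarith

theorem one_sub_sq_pos {ζ : ℂ} (h : ζ ∈ ball (0:ℂ) 1) : 0 < 1 - ‖ζ‖ ^ 2 := by
  have h1 : ‖ζ‖ < 1 := by simpa using h
  nlinarith [norm_nonneg ζ]

theorem sub_conj_eq (w : ℂ) : w - (starRingEnd ℂ) w = 2 * Complex.I * (w.im : ℂ) := by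
  rw [Complex.sub_conj]; push_cast; ring

theorem cay_sub (w : ℂ) {ζ : ℂ} (h : ζ ∈ ball (0:ℂ) 1) :
    cay w ζ - (starRingEnd ℂ) w = 2 * Complex.I * (w.im : ℂ) / (1 - ζ) := by
  have := one_sub_ne h
  rw [cay, ← sub_conj_eq]
  field_simp
  ring

theorem cay_im (w : ℂ) {ζ : ℂ} (h : ζ ∈ ball (0:ℂ) 1) :
    (cay w ζ).im = w.im * (1 - ‖ζ‖ ^ 2) / ‖1 - ζ‖ ^ 2 := by
  have h0 := one_sub_ne h
  have hns : Complex.normSq (1 - ζ) ≠ 0 := by simpa using h0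
  rw [cay, Complex.div_im, ← Complex.normSq_eq_norm_sq, ← Complex.normSq_eq_norm_sq]
  rw [← sub_div]
  congr 1
  simp [Complex.normSq_apply]
  ring

theorem cay_deriv (w : ℂ) {ζ : ℂ} (h : ζ ∈ ball (0:ℂ) 1) :
    HasDerivAt (cay w) (2 * Complex.I * (w.im : ℂ) / (1 - ζ) ^ 2) ζ := by
  have h0 := one_sub_ne h
  have h1 : HasDerivAt (fun ζ : ℂ => w - (starRingEnd ℂ) w * ζ) (-(starRingEnd ℂ) w) ζ := by
    simpa using ((hasDerivAt_id ζ).const_mul ((starRingEnd ℂ) w)).const_sub w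
  have h2 : HasDerivAt (fun ζ : ℂ => 1 - ζ) (-1) ζ := by
    simpa using (hasDerivAt_id ζ).const_sub 1
  have := h1.div h2 h0
  have e : 2 * Complex.I * (w.im : ℂ) / (1 - ζ) ^ 2 =
      (-(starRingEnd ℂ) w * (1 - ζ) - (w - (starRingEnd ℂ) w * ζ) * -1) / (1 - ζ) ^ 2 := by
    rw [← sub_conj_eq]
    congr 1; ring
  rw [e]
  exact this

theorem cay_inj {w : ℂ} (hw : 0 < w.im) : InjOn (cay w) (ball 0 1) := by
  intro a ha b hb hab
  have h1 := cay_sub w ha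
  have h2 := cay_sub w hb
  have ha0 := one_sub_ne ha
  have hb0 := one_sub_ne hb
  rw [hab, h2] at h1
  have hw' : (2 * Complex.I * (w.im : ℂ)) ≠ 0 := by
    simp [hw.ne']
  rw [div_eq_div_iff hb0 ha0] at h1
  have := mul_left_cancel₀ hw' h1
  linear_combination -this

theorem cay_image {w : ℂ} (hw : 0 < w.im) : cay w '' (ball 0 1) = UHP := by
  ext z
  constructor
  · rintro ⟨ζ, hζ, rfl⟩
    have := norm_pos_iff.2 (one_sub_ne hζ)
    have := one_sub_sq_pos hζ
    show 0 < (cay w ζ).im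
    rw [cay_im w hζ]; positivity
  · intro hz
    have hz : 0 < z.im := hz
    have hne : z - (starRingEnd ℂ) w ≠ 0 := by
      intro h
      have := congrArg Complex.im h
      simp at this; linarith
    refine ⟨(z - w) / (z - (starRingEnd ℂ) w), ?_, ?_⟩
    · rw [mem_ball_zero_iff, norm_div, div_lt_one (norm_pos_iff.2 hne)]
      rw [← sq_lt_sq₀ (norm_nonneg _) (norm_nonneg _), ← Complex.normSq_eq_norm_sq,
        ← Complex.normSq_eq_norm_sq, Complex.normSq_apply, Complex.normSq_apply]
      simp
      nlinarith [mul_pos hw hz]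
    · have hww : w - (starRingEnd ℂ) w ≠ 0 := by
        rw [sub_conj_eq]; simp [hw.ne']
      have e1 : 1 - (z - w) / (z - (starRingEnd ℂ) w)
          = (w - (starRingEnd ℂ) w) / (z - (starRingEnd ℂ) w) := by
        field_simp; ring
      rw [cay, e1, div_div_eq_mul_div, div_eq_iff hww]
      field_simp
      ring

theorem measurableSet_UHP : MeasurableSet UHP :=
  measurableSet_lt measurable_const Complex.measurable_im

theorem isOpen_UHP : IsOpen UHP := isOpen_lt continuous_const Complex.continuous_im

/-- jacobian times weight -/
def Jw (α : ℝ) (w ζ : ℂ) : ℝ :=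
  4 * w.im ^ 2 / ‖1 - ζ‖ ^ 4 * (w.im * (1 - ‖ζ‖ ^ 2) / ‖1 - ζ‖ ^ 2) ^ α

theorem det_mul_complex (a : ℂ) :
    (((ContinuousLinearMap.toSpanSingleton ℂ a).restrictScalars ℝ) : ℂ →L[ℝ] ℂ).det = ‖a‖ ^ 2 := by
  rw [← Complex.normSq_eq_norm_sq, ← Algebra.norm_complex_apply, Algebra.norm_apply,
    ContinuousLinearMap.det]
  congr 1
  ext; simp [mul_comm]

theorem Vm_integral (α : ℝ) (g : ℂ → ℂ) :
    ∫ z, g z ∂(Vm α) = ∫ z in UHP, (z.im ^ α) • g z := by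
  rw [Vm, integral_withDensity_eq_integral_toReal_smul₀ (by fun_prop) (by simp)]
  refine setIntegral_congr_fun measurableSet_UHP fun z hz => ?_
  have hz : 0 < z.im := hz
  rw [ENNReal.toReal_ofReal (by positivity)]

theorem Vm_integrable (α : ℝ) (g : ℂ → ℂ) :
    Integrable g (Vm α) ↔ IntegrableOn (fun z => (z.im ^ α) • g z) UHP := by
  rw [Vm, integrable_withDensity_iff_integrable_smul₀' (by fun_prop) (by simp)]
  refine integrableOn_congr_fun ?_ measurableSet_UHP
  intro z hz
  have hz : 0 < z.im := hz
  simp only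
  rw [ENNReal.toReal_ofReal (by positivity)]

theorem cov_aux (α : ℝ) {w : ℂ} (g : ℂ → ℂ) {ζ : ℂ} (hζ : ζ ∈ ball (0:ℂ) 1) :
    |(((ContinuousLinearMap.toSpanSingleton ℂ (2 * Complex.I * (w.im : ℂ) / (1 - ζ) ^ 2)
      ).restrictScalars ℝ) : ℂ →L[ℝ] ℂ).det| • (((cay w ζ).im ^ α) • g (cay w ζ))
      = Jw α w ζ • g (cay w ζ) := by
  rw [det_mul_complex, smul_smul, cay_im w hζ, Jw]
  congr 2
  rw [abs_of_nonneg (by positivity)]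
  simp only [norm_div, norm_mul, norm_pow, Complex.norm_I, Complex.norm_ofNat, Complex.norm_real,
    Real.norm_eq_abs, div_pow, mul_pow, sq_abs]
  ring

theorem cov_integral (α : ℝ) {w : ℂ} (hw : 0 < w.im) (g : ℂ → ℂ) :
    ∫ z, g z ∂(Vm α) = ∫ ζ in ball (0:ℂ) 1, Jw α w ζ • g (cay w ζ) := by
  rw [Vm_integral, ← cay_image hw, integral_image_eq_integral_abs_det_fderiv_smul volume
    measurableSet_ball
    (fun ζ hζ => ((cay_deriv w hζ).hasFDerivAt.restrictScalars ℝ).hasFDerivWithinAt) (cay_inj hw)]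
  exact setIntegral_congr_fun measurableSet_ball fun ζ hζ => cov_aux α g hζ

theorem cov_integrable (α : ℝ) {w : ℂ} (hw : 0 < w.im) (g : ℂ → ℂ) :
    Integrable g (Vm α) ↔ IntegrableOn (fun ζ => Jw α w ζ • g (cay w ζ)) (ball (0:ℂ) 1) := by
  rw [Vm_integrable, ← cay_image hw, integrableOn_image_iff_integrableOn_abs_det_fderiv_smul volume
    measurableSet_ball
    (fun ζ hζ => ((cay_deriv w hζ).hasFDerivAt.restrictScalars ℝ).hasFDerivWithinAt) (cay_inj hw)]
  exact integrableOn_congr_fun (fun ζ hζ => cov_aux α g hζ) measurableSet_ball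

end Cayley
section Repro

open Metric

theorem kf_re_pos {w z : ℂ} (hw : 0 < w.im) (hz : 0 < z.im) :
    0 < (-Complex.I * (z - (starRingEnd ℂ) w)).re := by
  simp; linarith

theorem kf_cay (s : ℝ) {w : ℂ} (hw : 0 < w.im) {ζ : ℂ} (hζ : ζ ∈ ball (0:ℂ) 1) :
    kf s w (cay w ζ) = (((2 * w.im) ^ (-s) : ℝ) : ℂ) * (1 - ζ) ^ (s : ℂ) := by
  have h0 := one_sub_ne hζ
  have hre := one_sub_re_pos hζ
  have e : -Complex.I * (cay w ζ - (starRingEnd ℂ) w) = ((2 * w.im : ℝ) : ℂ) * (1 - ζ)⁻¹ := by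
    rw [cay_sub w hζ, div_eq_mul_inv]
    push_cast
    linear_combination (-2 * (w.im : ℂ) * (1 - ζ)⁻¹) * Complex.I_mul_I
  have harg : (1 - ζ).arg ≠ Real.pi := by
    intro h
    have := (Complex.arg_eq_pi_iff.1 h).1
    linarith
  have hv : 0 < 2 * w.im := by linarith
  rw [kf, e, Complex.cpow_def_of_ne_zero
    (mul_ne_zero (by exact_mod_cast hv.ne') (inv_ne_zero h0)),
    Complex.log_ofReal_mul hv (inv_ne_zero h0), Complex.log_inv _ harg,
    Complex.cpow_def_of_ne_zero h0, Real.rpow_def_of_pos hv, Complex.ofReal_exp, ← Complex.exp_add]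
  congr 1
  push_cast
  ring

theorem cpow_conj_mul (s : ℝ) {x : ℂ} (hx : x ≠ 0) :
    (starRingEnd ℂ) (x ^ (s : ℂ)) = ((‖x‖ ^ (2 * s) : ℝ) : ℂ) * x ^ (-(s : ℂ)) := by
  have h1 : x ^ (s : ℂ) ≠ 0 := by simp [Complex.cpow_eq_zero_iff, hx]
  rw [Complex.cpow_neg, eq_mul_inv_iff_mul_eq₀ h1, mul_comm, Complex.mul_conj,
    Complex.normSq_eq_norm_sq, Complex.norm_cpow_real, ← Real.rpow_natCast, ← Real.rpow_mul
    (norm_nonneg _)]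
  congr 2; push_cast; ring

theorem Jw_identity (α : ℝ) {w : ℂ} (hw : 0 < w.im) {ζ : ℂ} (hζ : ζ ∈ ball (0:ℂ) 1) :
    Jw α w ζ * ((2 * w.im) ^ (-(α + 2)) * ‖1 - ζ‖ ^ (2 * (α + 2)))
      = 4 * 2 ^ (-(α + 2)) * (1 - ‖ζ‖ ^ 2) ^ α := by
  have hN : 0 < ‖1 - ζ‖ := norm_pos_iff.2 (one_sub_ne hζ)
  have ha := one_sub_sq_pos hζ
  rw [Jw]
  generalize ‖1 - ζ‖ = N at *
  generalize 1 - ‖ζ‖ ^ 2 = a at *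
  generalize w.im = v at *
  rw [Real.div_rpow (by positivity) (by positivity), Real.mul_rpow hw.le ha.le,
    Real.mul_rpow (by norm_num) hw.le, Real.rpow_neg hw.le, Real.rpow_add hw,
    Real.rpow_mul hN.le, Real.rpow_ofNat, Real.rpow_ofNat, Real.rpow_add (by positivity),
    Real.rpow_ofNat]
  have h1 : 0 < v ^ α := by positivity
  have h2 : 0 < (N ^ 2) ^ α := by positivity
  field_simp

theorem kf_memLp {α : ℝ} (hα : -1 / 2 ≤ α) {w : ℂ} (hw : 0 < w.im) :
    MemLp (kf (α + 2) w) 2 (Vm α) := by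
  have hm : AEStronglyMeasurable (kf (α + 2) w) (Vm α) := by
    refine Measurable.aestronglyMeasurable ?_
    unfold kf
    fun_prop
  rw [memLp_two_iff_integrable_sq_norm hm]
  have h : Integrable (fun z => ((‖kf (α + 2) w z‖ ^ 2 : ℝ) : ℂ)) (Vm α) := by
    rw [cov_integrable α hw]
    have h1 := ((disk_weight_integrable hα).const_mul
      (4 * 2 ^ (-(α + 2)) * (2 * w.im) ^ (-(α + 2)))).ofReal (𝕜 := ℂ)
    refine (integrableOn_congr_fun ?_ measurableSet_ball).1 h1
    intro ζ hζ
    have e := Jw_identity α hw hζ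
    simp only
    rw [kf_cay _ hw hζ, norm_mul, Complex.norm_cpow_real, Complex.norm_real,
      Real.norm_of_nonneg (by positivity), mul_pow]
    rw [Complex.real_smul, ← Complex.ofReal_mul]
    congr 1
    have e2 : (‖1 - ζ‖ ^ (α + 2)) ^ 2 = ‖1 - ζ‖ ^ (2 * (α + 2)) := by
      rw [← Real.rpow_natCast, ← Real.rpow_mul (norm_nonneg _)]
      congr 1; push_cast; ring
    rw [e2]
    change _ = Jw α w ζ * (((2 * w.im) ^ (-(α + 2))) ^ 2 * ‖1 - ζ‖ ^ (2 * (α + 2)))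
    linear_combination (-(2 * w.im) ^ (-(α + 2))) * e
  have := h.re
  simpa only [RCLike.re_to_complex, Complex.ofReal_re] using this

/-- The constant of the reproducing formula. -/
def Cr (α : ℝ) : ℝ := 4 * 2 ^ (-(α + 2)) * ∫ ζ in ball (0:ℂ) 1, (1 - ‖ζ‖ ^ 2) ^ α

theorem Cr_pos {α : ℝ} (hα : -1 / 2 ≤ α) : 0 < Cr α := by
  have := disk_weight_pos hα
  unfold Cr
  positivity

theorem cay_zero (w : ℂ) : cay w 0 = w := by simp [cay]

theorem repro_one {α : ℝ} {w : ℂ} (hw : 0 < w.im) (H : ℂ → ℂ)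
    (hd : DifferentiableOn ℂ H UHP)
    (hi : Integrable (fun z => (starRingEnd ℂ) (kf (α + 2) w z) * H z) (Vm α)) :
    ∫ z, (starRingEnd ℂ) (kf (α + 2) w z) * H z ∂(Vm α) = (Cr α : ℂ) * H w := by
  have hpt : ∀ ζ ∈ ball (0:ℂ) 1,
      Jw α w ζ • ((starRingEnd ℂ) (kf (α + 2) w (cay w ζ)) * H (cay w ζ)) =
      ((4 * 2 ^ (-(α + 2)) : ℝ) : ℂ) * (((1 - ‖ζ‖ ^ 2) ^ α : ℝ) *
        ((1 - ζ) ^ (-((α + 2 : ℝ) : ℂ)) * H (cay w ζ))) := by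
    intro ζ hζ
    have e := Jw_identity α hw hζ
    rw [kf_cay _ hw hζ, map_mul, Complex.conj_ofReal, cpow_conj_mul _ (one_sub_ne hζ),
      Complex.real_smul]
    have e' := congrArg (fun x : ℝ => (x : ℂ)) e
    simp only [Complex.ofReal_mul] at e'
    rw [Complex.ofReal_mul]
    linear_combination ((1 - ζ) ^ (-((α + 2 : ℝ) : ℂ)) * H (cay w ζ)) * e'
  have hc : ((4 * 2 ^ (-(α + 2)) : ℝ) : ℂ) ≠ 0 := by
    exact_mod_cast (by positivity : (4 * 2 ^ (-(α + 2)) : ℝ) ≠ 0)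
  rw [cov_integral α hw, setIntegral_congr_fun measurableSet_ball hpt, integral_const_mul,
    disk_mean (α := α) (fun ζ => (1 - ζ) ^ (-((α + 2 : ℝ) : ℂ)) * H (cay w ζ))]
  · simp only [cay_zero, sub_zero, Complex.one_cpow, one_mul]
    rw [Cr]; push_cast; ring
  · refine DifferentiableOn.mul ?_ ?_
    · intro ζ hζ
      refine DifferentiableAt.differentiableWithinAt ?_
      refine DifferentiableAt.cpow_const (by fun_prop) ?_
      exact Complex.mem_slitPlane_iff.2 (Or.inl (one_sub_re_pos hζ))
    · refine hd.comp (fun ζ hζ => (cay_deriv w hζ).differentiableAt.differentiableWithinAt) ?_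
      intro ζ hζ
      rw [← cay_image hw]
      exact ⟨ζ, hζ, rfl⟩
  · rw [cov_integrable α hw, integrableOn_congr_fun hpt measurableSet_ball] at hi
    have := hi.const_mul (((4 * 2 ^ (-(α + 2)) : ℝ) : ℂ)⁻¹)
    simp only [inv_mul_cancel_left₀ hc] at this
    exact this

end Repro
section Repro2

/-- the two-variable kernel -/
def kk (s : ℝ) (p z : ℂ × ℂ) : ℂ := kf s p.1 z.1 * kf s p.2 z.2

theorem Vm_ae (α : ℝ) : ∀ᵐ z ∂(Vm α), z ∈ UHP :=
  (withDensity_absolutelyContinuous _ _).ae_le (ae_restrict_mem measurableSet_UHP)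

instance Vm_sfinite (α : ℝ) : SFinite (Vm α) := by unfold Vm; infer_instance

theorem Vm2_ae (α : ℝ) : ∀ᵐ z ∂((Vm α).prod (Vm α)), z ∈ UHP ×ˢ UHP := by
  filter_upwards [Measure.quasiMeasurePreserving_fst.ae (Vm_ae α),
    Measure.quasiMeasurePreserving_snd.ae (Vm_ae α)] with z h1 h2
  exact ⟨h1, h2⟩

theorem aesm_of_diff (α : ℝ) {G : ℂ × ℂ → ℂ} (hG : DifferentiableOn ℂ G (UHP ×ˢ UHP)) :
    AEStronglyMeasurable G ((Vm α).prod (Vm α)) := by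
  have := hG.continuousOn.aestronglyMeasurable (μ := (Vm α).prod (Vm α))
    (measurableSet_UHP.prod measurableSet_UHP)
  rwa [Measure.restrict_eq_self_of_ae_mem (Vm2_ae α)] at this

theorem kk_memLp {α : ℝ} (hα : -1 / 2 ≤ α) {p : ℂ × ℂ} (hp : p ∈ UHP ×ˢ UHP) :
    MemLp (kk (α + 2) p) 2 ((Vm α).prod (Vm α)) := by
  have h1 := kf_memLp hα hp.1
  have h2 := kf_memLp hα hp.2
  have hm : AEStronglyMeasurable (kk (α + 2) p) ((Vm α).prod (Vm α)) :=
    (h1.1.comp_fst).mul (h2.1.comp_snd)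
  rw [memLp_two_iff_integrable_sq_norm hm]
  rw [memLp_two_iff_integrable_sq_norm h1.1] at h1
  rw [memLp_two_iff_integrable_sq_norm h2.1] at h2
  refine (h1.mul_prod h2).congr (Filter.Eventually.of_forall fun z => ?_)
  simp only [kk, norm_mul, mul_pow]

theorem kf_ne_zero (s : ℝ) {w z : ℂ} (hw : 0 < w.im) (hz : 0 < z.im) : kf s w z ≠ 0 := by
  have h := kf_re_pos hw hz
  rw [kf, Ne, Complex.cpow_eq_zero_iff]
  rintro ⟨h1, -⟩
  rw [h1] at h
  simp at h

theorem kf_diff (s : ℝ) {w : ℂ} (hw : 0 < w.im) : DifferentiableOn ℂ (kf s w) UHP := by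
  intro z hz
  refine DifferentiableAt.differentiableWithinAt ?_
  unfold kf
  refine DifferentiableAt.cpow_const (by fun_prop) ?_
  exact Complex.mem_slitPlane_iff.2 (Or.inl (kf_re_pos hw hz))

theorem kk_diff (s : ℝ) {p : ℂ × ℂ} (hp : p ∈ UHP ×ˢ UHP) :
    DifferentiableOn ℂ (kk s p) (UHP ×ˢ UHP) := by
  unfold kk
  exact ((kf_diff s hp.1).comp differentiableOn_fst fun z hz => hz.1).mul
    ((kf_diff s hp.2).comp differentiableOn_snd fun z hz => hz.2)

theorem repro_two {α : ℝ} (hα : -1 / 2 ≤ α) {p : ℂ × ℂ} (hp : p ∈ UHP ×ˢ UHP) {G : ℂ × ℂ → ℂ}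
    (hd : DifferentiableOn ℂ G (UHP ×ˢ UHP)) (hG : MemLp G 2 ((Vm α).prod (Vm α))) :
    ∫ z, (starRingEnd ℂ) (kk (α + 2) p z) * G z ∂((Vm α).prod (Vm α))
      = ((Cr α ^ 2 : ℝ) : ℂ) * G p := by
  have hf : Integrable (fun z => (starRingEnd ℂ) (kk (α + 2) p z) * G z)
      ((Vm α).prod (Vm α)) := (kk_memLp hα hp).star.integrable_mul hG
  have hin : ∀ᵐ x ∂(Vm α), ∫ y, (starRingEnd ℂ) (kk (α + 2) p (x, y)) * G (x, y) ∂(Vm α)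
      = (Cr α : ℂ) * ((starRingEnd ℂ) (kf (α + 2) p.1 x) * G (x, p.2)) := by
    filter_upwards [hf.prod_right_ae, Vm_ae α] with x hx hxU
    have hne : (starRingEnd ℂ) (kf (α + 2) p.1 x) ≠ 0 :=
      (map_ne_zero _).2 (kf_ne_zero _ hp.1 hxU)
    have e : ∀ y, (starRingEnd ℂ) (kk (α + 2) p (x, y)) * G (x, y) =
        (starRingEnd ℂ) (kf (α + 2) p.1 x) *
          ((starRingEnd ℂ) (kf (α + 2) p.2 y) * G (x, y)) := by
      intro y; simp only [kk, map_mul]; ring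
    simp only [e] at hx ⊢
    rw [integral_const_mul, repro_one (α := α) hp.2 (fun y => G (x, y))]
    · ring
    · exact hd.comp (by fun_prop) fun y hy => ⟨hxU, hy⟩
    · have := hx.const_mul ((starRingEnd ℂ) (kf (α + 2) p.1 x))⁻¹
      simpa only [inv_mul_cancel_left₀ hne] using this
  have hC : (Cr α : ℂ) ≠ 0 := by exact_mod_cast (Cr_pos hα).ne'
  rw [integral_prod _ hf, integral_congr_ae hin, integral_const_mul,
    repro_one (α := α) hp.1 (fun x => G (x, p.2))]
  · push_cast; ring
  · exact hd.comp (by fun_prop) fun y hy => ⟨hy, hp.2⟩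
  · have := (hf.integral_prod_left.congr hin).const_mul (Cr α : ℂ)⁻¹
    simpa only [inv_mul_cancel_left₀ hC] using this

theorem inner_toLp {X : Type*} [MeasurableSpace X] {μ : Measure X} {f g : X → ℂ}
    (hf : MemLp f 2 μ) (hg : MemLp g 2 μ) :
    inner ℂ (hf.toLp f) (hg.toLp g) = ∫ x, (starRingEnd ℂ) (f x) * g x ∂μ := by
  rw [L2.inner_def]
  refine integral_congr_ae ?_
  filter_upwards [hf.coeFn_toLp, hg.coeFn_toLp] with x h1 h2
  rw [h1, h2, RCLike.inner_apply, mul_comm]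

/-- the kernels as elements of `L²` -/
def kLp {α : ℝ} (hα : -1 / 2 ≤ α) (p : (UHP ×ˢ UHP : Set (ℂ × ℂ))) :
    Lp ℂ 2 ((Vm α).prod (Vm α)) := (kk_memLp hα p.2).toLp _

theorem G_mem_closure {α : ℝ} (hα : -1 / 2 ≤ α) {G : ℂ × ℂ → ℂ}
    (hd : DifferentiableOn ℂ G (UHP ×ˢ UHP)) (hG : MemLp G 2 ((Vm α).prod (Vm α))) :
    hG.toLp G ∈ closure (Submodule.span ℂ (Set.range (kLp hα)) :
      Set (Lp ℂ 2 ((Vm α).prod (Vm α)))) := by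
  refine mem_closure_of_reproducing _ (UHP ×ˢ UHP) (Vm2_ae α) (kLp hα) (Cr α ^ 2)
    (pow_pos (Cr_pos hα) 2) ?_ _ ?_
  · intro q
    filter_upwards [(kk_memLp hα q.2).coeFn_toLp] with x hx hxS
    simp only [kLp]
    rw [hx, inner_toLp, repro_two hα hxS (kk_diff _ q.2) (kk_memLp hα q.2)]
  · filter_upwards [hG.coeFn_toLp] with x hx hxS
    simp only [kLp]
    rw [hx, inner_toLp, repro_two hα hxS hd hG]

end Repro2
section Gram

open Complex Filter Topology

theorem gamma_real_int {s : ℝ} (hs : 0 < s) {c : ℝ} (hc : 0 < c) :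
    IntegrableOn (fun t : ℝ => t ^ (s - 1) * Real.exp (-(c * t))) (Ioi 0) := by
  refine Integrable.of_integral_ne_zero ?_
  rw [Real.integral_rpow_mul_exp_neg_mul_Ioi hs hc]
  have := Real.Gamma_pos_of_pos hs
  positivity

theorem gamma_norm (s : ℝ) (r : ℂ) {t : ℝ} (ht : 0 < t) :
    ‖((t ^ (s - 1) : ℝ) : ℂ) * cexp (-(r * t))‖ = t ^ (s - 1) * Real.exp (-(r.re * t)) := by
  rw [norm_mul, Complex.norm_real, Complex.norm_exp, Real.norm_of_nonneg (by positivity)]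
  simp

theorem gamma_meas (s : ℝ) (r : ℂ) :
    AEStronglyMeasurable (fun t : ℝ => ((t ^ (s - 1) : ℝ) : ℂ) * cexp (-(r * t)))
      (volume.restrict (Ioi 0)) := by
  refine Measurable.aestronglyMeasurable ?_
  fun_prop

theorem gamma_cint {s : ℝ} (hs : 0 < s) {r : ℂ} (hr : 0 < r.re) :
    IntegrableOn (fun t : ℝ => ((t ^ (s - 1) : ℝ) : ℂ) * cexp (-(r * t))) (Ioi 0) := by
  refine (gamma_real_int hs hr).mono' (gamma_meas s r) ?_
  filter_upwards [ae_restrict_mem measurableSet_Ioi] with t ht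
  rw [gamma_norm s r ht]

theorem gamma_diff {s : ℝ} (hs : 0 < s) {r : ℂ} (hr : 0 < r.re) :
    DifferentiableAt ℂ
      (fun r : ℂ => ∫ t in Ioi (0:ℝ), ((t ^ (s - 1) : ℝ) : ℂ) * cexp (-(r * t))) r := by
  have hball : ∀ x ∈ Metric.ball r (r.re / 2), r.re / 2 < x.re := by
    intro x hx
    rw [Metric.mem_ball, dist_eq_norm] at hx
    have h1 := Complex.abs_re_le_norm (x - r)
    have h2 := abs_le.1 (h1.trans hx.le)
    have h3 := abs_lt.1 (lt_of_le_of_lt h1 hx)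
    simp at h3
    linarith [h3.1]
  have := hasDerivAt_integral_of_dominated_loc_of_deriv_le (𝕜 := ℂ) (μ := volume.restrict (Ioi (0:ℝ)))
    (F := fun (r : ℂ) (t : ℝ) => ((t ^ (s - 1) : ℝ) : ℂ) * cexp (-(r * t)))
    (F' := fun (r : ℂ) (t : ℝ) => ((t ^ (s - 1) : ℝ) : ℂ) * (cexp (-(r * t)) * (-(1 * t))))
    (x₀ := r) (s := Metric.ball r (r.re / 2))
    (bound := fun t => t ^ ((s + 1) - 1) * Real.exp (-(r.re / 2 * t)))
    (Metric.ball_mem_nhds _ (by linarith))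
    (Eventually.of_forall fun x => gamma_meas s x) (gamma_cint hs hr)
    (by refine Measurable.aestronglyMeasurable ?_; fun_prop)
    (by
      filter_upwards [ae_restrict_mem measurableSet_Ioi] with t ht x hx
      have ht' : 0 < t := ht
      rw [← mul_assoc, norm_mul, gamma_norm s x ht]
      have e : ‖(-(1 * (t:ℂ)))‖ = t := by simp [abs_of_pos ht']
      rw [e]
      have e2 : t ^ (s + 1 - 1) = t ^ (s - 1) * t := by
        rw [← Real.rpow_add_one ht'.ne']; ring_nf
      rw [e2]
      have : Real.exp (-(x.re * t)) ≤ Real.exp (-(r.re / 2 * t)) := by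
        rw [Real.exp_le_exp]
        nlinarith [hball x hx]
      have h0 : 0 ≤ t ^ (s - 1) * t := by positivity
      nlinarith)
    (gamma_real_int (by linarith) (by linarith))
    (by
      refine Eventually.of_forall fun t x hx => ?_
      exact ((((hasDerivAt_id x).mul_const (t:ℂ)).neg).cexp).const_mul _)
  exact this.2.differentiableAt

theorem gamma_complex {s : ℝ} (hs : 0 < s) {r : ℂ} (hr : 0 < r.re) :
    ∫ t in Ioi (0:ℝ), ((t ^ (s - 1) : ℝ) : ℂ) * cexp (-(r * t))
      = (Real.Gamma s : ℂ) * r ^ (-(s : ℂ)) := by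
  have ho : IsOpen {r : ℂ | 0 < r.re} := isOpen_lt continuous_const Complex.continuous_re
  have h1 : AnalyticOnNhd ℂ
      (fun r : ℂ => ∫ t in Ioi (0:ℝ), ((t ^ (s - 1) : ℝ) : ℂ) * cexp (-(r * t)))
      {r : ℂ | 0 < r.re} :=
    DifferentiableOn.analyticOnNhd
      (fun r hr => (gamma_diff hs hr).differentiableWithinAt) ho
  have h2 : AnalyticOnNhd ℂ (fun r : ℂ => (Real.Gamma s : ℂ) * r ^ (-(s : ℂ)))
      {r : ℂ | 0 < r.re} := by
    refine DifferentiableOn.analyticOnNhd (fun r hr => ?_) ho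
    refine DifferentiableAt.differentiableWithinAt ?_
    refine DifferentiableAt.const_mul ?_ _
    exact DifferentiableAt.cpow_const differentiableAt_id
      (Complex.mem_slitPlane_iff.2 (Or.inl hr))
  have hreal : ∀ x : ℝ, 0 < x →
      ∫ t in Ioi (0:ℝ), ((t ^ (s - 1) : ℝ) : ℂ) * cexp (-((x:ℂ) * t))
      = (Real.Gamma s : ℂ) * (x:ℂ) ^ (-(s : ℂ)) := by
    intro x hx
    have h := Real.integral_rpow_mul_exp_neg_mul_Ioi hs hx
    have h' := congrArg (fun y : ℝ => (y:ℂ)) h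
    rw [← integral_complex_ofReal] at h'
    have e : (1 / x) ^ s * Real.Gamma s = Real.Gamma s * x ^ (-s) := by
      rw [one_div, Real.inv_rpow hx.le, ← Real.rpow_neg hx.le, mul_comm]
    rw [← Complex.ofReal_neg, ← Complex.ofReal_cpow hx.le, ← Complex.ofReal_mul, ← e, ← h']
    refine integral_congr_ae (Eventually.of_forall fun t => ?_)
    push_cast
    rfl
  refine h1.eqOn_of_preconnected_of_frequently_eq h2 ?_ (z₀ := 1) (by simp) ?_ hr
  · exact (convex_halfSpace_re_gt 0).isPreconnected
  · have ht : Tendsto (fun n : ℕ => ((1 + 1 / ((n:ℝ) + 1) : ℝ) : ℂ)) atTop (𝓝[≠] 1) := by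
      refine tendsto_nhdsWithin_iff.2 ⟨?_, ?_⟩
      · have h := (tendsto_one_div_add_atTop_nhds_zero_nat (𝕜 := ℝ)).const_add 1
        rw [add_zero] at h
        exact_mod_cast (Complex.continuous_ofReal.tendsto _).comp h
      · refine Eventually.of_forall fun n => ?_
        have : (0:ℝ) < 1 / ((n:ℝ) + 1) := by positivity
        simp only [mem_compl_iff, mem_singleton_iff]
        intro h
        have h' : (1 + 1 / ((n:ℝ) + 1) : ℝ) = 1 := by exact_mod_cast h
        linarith
    refine ht.frequently (Eventually.of_forall fun n => ?_).frequently
    exact hreal _ (by positivity)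

/-- the dual cone -/
def Lam : Set (Fin 3 → ℝ) := {t | 0 < t 0 ∧ 0 < t 1 ∧ (t 2) ^ 2 < 4 * t 0 * t 1}

/-- the quadratic form -/
def Dq (t : Fin 3 → ℝ) : ℝ := 4 * t 0 * t 1 - (t 2) ^ 2

theorem measurableSet_Lam : MeasurableSet Lam := by
  have h0 : MeasurableSet {t : Fin 3 → ℝ | 0 < t 0} :=
    measurableSet_lt (by fun_prop) (by fun_prop)
  have h1 : MeasurableSet {t : Fin 3 → ℝ | 0 < t 1} :=
    measurableSet_lt (by fun_prop) (by fun_prop)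
  have h2 : MeasurableSet {t : Fin 3 → ℝ | (t 2) ^ 2 < 4 * t 0 * t 1} :=
    measurableSet_lt (by fun_prop) (by fun_prop)
  exact h0.inter (h1.inter h2)

theorem Lam_abs {t : Fin 3 → ℝ} (ht : t ∈ Lam) : |t 2| ≤ t 0 + t 1 := by
  obtain ⟨h0, h1, h2⟩ := ht
  refine abs_le_of_sq_le_sq ?_ (by linarith)
  nlinarith [sq_nonneg (t 0 - t 1)]

theorem exp_abs_int {c : ℝ} (hc : 0 < c) : Integrable (fun x : ℝ => Real.exp (-c * |x|)) := by
  have h := exp_neg_integrableOn_Ioi 0 hc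
  have h2 : IntegrableOn (fun x : ℝ => Real.exp (-c * |x|)) (Ioi 0) := by
    refine h.congr_fun (fun x hx => ?_) measurableSet_Ioi
    rw [abs_of_pos hx]
  have h3 : IntegrableOn (fun x : ℝ => Real.exp (-c * |x|)) (Iic 0) := by
    refine (integrableOn_exp_mul_Iic hc 0).congr_fun (fun x hx => ?_) measurableSet_Iic
    rw [abs_of_nonpos hx]
    ring_nf
  rw [← integrableOn_univ, ← Iic_union_Ioi (a := (0:ℝ))]
  exact h3.union h2

theorem cone_int (k : ℕ) {c : ℝ} (hc : 0 < c) :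
    IntegrableOn (fun t : Fin 3 → ℝ => (t 0 + t 1) ^ k * Real.exp (-(c * (t 0 + t 1)))) Lam := by
  have h0 : Integrable (fun t : Fin 3 → ℝ => ∏ i, Real.exp (-(c/6) * |t i|)) :=
    Integrable.fintype_prod (f := fun _ x => Real.exp (-(c/6) * |x|))
      fun i => exp_abs_int (by positivity)
  refine ((h0.const_mul ((k.factorial : ℝ) * (2 / c) ^ k)).integrableOn (s := Lam)).mono' ?_ ?_
  · refine Measurable.aestronglyMeasurable ?_
    fun_prop
  · filter_upwards [ae_restrict_mem measurableSet_Lam] with t ht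
    have ha := Lam_abs ht
    obtain ⟨h0, h1, h2⟩ := ht
    have hu : 0 < t 0 + t 1 := by linarith
    rw [Real.norm_of_nonneg (by positivity)]
    have hk := Real.pow_div_factorial_le_exp (c / 2 * (t 0 + t 1)) (by positivity) k
    rw [← Real.exp_sum, Fin.sum_univ_three]
    have e1 : (t 0 + t 1) ^ k
        ≤ (k.factorial : ℝ) * (2 / c) ^ k * Real.exp (c / 2 * (t 0 + t 1)) := by
      have : (t 0 + t 1) ^ k = (k.factorial : ℝ) * (2 / c) ^ k *
          ((c / 2 * (t 0 + t 1)) ^ k / k.factorial) := by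
        have := Nat.factorial_pos k
        rw [mul_pow, div_pow, div_pow]
        field_simp
      rw [this]
      gcongr
    calc (t 0 + t 1) ^ k * Real.exp (-(c * (t 0 + t 1)))
        ≤ ((k.factorial : ℝ) * (2 / c) ^ k * Real.exp (c / 2 * (t 0 + t 1)))
          * Real.exp (-(c * (t 0 + t 1))) := by gcongr
      _ = (k.factorial : ℝ) * (2 / c) ^ k * Real.exp (-(c / 2 * (t 0 + t 1))) := by
          rw [mul_assoc, ← Real.exp_add]; ring_nf
      _ ≤ _ := by
          gcongr
          rw [abs_of_pos h0, abs_of_pos h1]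
          nlinarith

/-- one-dimensional profile -/
def prof (n : ℕ) (a t : ℝ) : ℝ := if t ^ 2 < a then (a - t ^ 2) ^ n else 0

/-- normalising constant of the profile -/
def Kp (n : ℕ) : ℝ := ∫ t, prof n 1 t

theorem prof_meas (n : ℕ) (a : ℝ) : Measurable (prof n a) := by
  unfold prof
  refine Measurable.ite (measurableSet_lt (by fun_prop) (by fun_prop)) (by fun_prop) (by fun_prop)

theorem Kp_pos (n : ℕ) : 0 < Kp n := by
  have hsupp : Function.support (prof n 1) = Ioo (-1) 1 := by
    ext t
    simp only [Function.mem_support, prof, mem_Ioo, ← abs_lt, ← sq_lt_one_iff_abs_lt_one]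
    constructor
    · intro h
      by_contra h'
      exact h (if_neg h')
    · intro h
      rw [if_pos h]
      have : 0 < 1 - t ^ 2 := by linarith
      positivity
  have hnn : ∀ t, 0 ≤ prof n 1 t := by
    intro t
    unfold prof
    split_ifs with h
    · have : 0 < 1 - t ^ 2 := by linarith
      positivity
    · exact le_rfl
  have hintg : Integrable (prof n 1) := by
    rw [← integrableOn_iff_integrable_of_support_subset hsupp.le]
    refine Measure.integrableOn_of_bounded (M := 1) (by simp) (prof_meas n 1).aestronglyMeasurable
      (Eventually.of_forall fun t => ?_)
    rw [Real.norm_of_nonneg (hnn t)]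
    unfold prof
    split_ifs with h
    · refine pow_le_one₀ (by linarith) (by nlinarith [sq_nonneg t])
    · norm_num
  rw [Kp, integral_pos_iff_support_of_nonneg hnn hintg, hsupp]
  simp

theorem prof_scale (n : ℕ) {a : ℝ} (ha : 0 < a) :
    ∫ t, prof n a t = a ^ ((n:ℝ) + 1 / 2) * Kp n := by
  have hs := Real.sqrt_pos.2 ha
  have h := Measure.integral_comp_mul_left (prof n a) (Real.sqrt a)
  have e : ∀ x, prof n a (Real.sqrt a * x) = a ^ n * prof n 1 x := by
    intro x
    unfold prof
    rw [mul_pow, Real.sq_sqrt ha.le]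
    by_cases hx : x ^ 2 < 1
    · rw [if_pos hx, if_pos (by nlinarith), ← mul_pow]
      ring
    · rw [if_neg hx, if_neg (by nlinarith), mul_zero]
  simp_rw [e] at h
  rw [integral_const_mul, abs_of_pos (by positivity), smul_eq_mul] at h
  have : ∫ t, prof n a t = Real.sqrt a * (a ^ n * ∫ x, prof n 1 x) := by
    rw [h]; field_simp
  rw [this, Kp, Real.rpow_add ha, Real.rpow_natCast, Real.sqrt_eq_rpow]
  ring

theorem gram_integrable (n : ℕ) {r₀ r₁ : ℂ} (h0 : 0 < r₀.re) (h1 : 0 < r₁.re) :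
    IntegrableOn (fun t : Fin 3 → ℝ => ((Dq t ^ n : ℝ) : ℂ) * cexp (-(r₀ * t 0 + r₁ * t 1))) Lam := by
  have hc : 0 < min r₀.re r₁.re := lt_min h0 h1
  refine (cone_int (2 * n) hc).mono' ?_ ?_
  · refine Measurable.aestronglyMeasurable ?_
    unfold Dq
    fun_prop
  · filter_upwards [ae_restrict_mem measurableSet_Lam] with t ht
    obtain ⟨a0, a1, a2⟩ := ht
    have hD : 0 < Dq t := by unfold Dq; linarith
    rw [norm_mul, Complex.norm_real, Complex.norm_exp, Real.norm_of_nonneg (by positivity), pow_mul]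
    have hD2 : Dq t ≤ (t 0 + t 1) ^ 2 := by
      unfold Dq
      nlinarith [sq_nonneg (t 0 - t 1), sq_nonneg (t 2)]
    gcongr
    simp only [neg_re, add_re, mul_re, ofReal_re, ofReal_im, mul_zero, sub_zero]
    have := min_le_left r₀.re r₁.re
    have := min_le_right r₀.re r₁.re
    nlinarith

/-- Gram constant -/
def Cg (m : ℕ) : ℝ :=
  (4:ℝ) ^ (((2 * m : ℕ):ℝ) + 1 / 2) * Kp (2 * m) * Real.Gamma (2 * m + 3 / 2) ^ 2

theorem Cg_pos (m : ℕ) : 0 < Cg m := by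
  have := Kp_pos (2 * m)
  have : 0 < Real.Gamma (2 * m + 3 / 2) := Real.Gamma_pos_of_pos (by positivity)
  unfold Cg
  positivity

theorem gram_integral (m : ℕ) {r₀ r₁ : ℂ} (h0 : 0 < r₀.re) (h1 : 0 < r₁.re) :
    ∫ t in Lam, ((Dq t ^ (2 * m) : ℝ) : ℂ) * cexp (-(r₀ * t 0 + r₁ * t 1))
      = (Cg m : ℂ) * (r₀ ^ (-((2 * m + 3 / 2 : ℝ) : ℂ)) * r₁ ^ (-((2 * m + 3 / 2 : ℝ) : ℂ))) := by
  set s : ℝ := 2 * m + 3 / 2 with hs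
  have hs0 : 0 < s := by positivity
  set g : (Fin 3 → ℝ) → ℂ :=
    Lam.indicator fun t => ((Dq t ^ (2 * m) : ℝ) : ℂ) * cexp (-(r₀ * t 0 + r₁ * t 1)) with hg
  have hgi : Integrable g := (integrable_indicator_iff measurableSet_Lam).2 (gram_integrable _ h0 h1)
  have hmp := (volume_preserving_piFinSuccAbove (fun _ : Fin 3 => ℝ) 2).symm
  have e1 : ∫ t in Lam, ((Dq t ^ (2 * m) : ℝ) : ℂ) * cexp (-(r₀ * t 0 + r₁ * t 1)) = ∫ t, g t :=
    (integral_indicator measurableSet_Lam).symm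
  rw [e1, ← hmp.integral_comp' (g := g)]
  have hgi' := (hmp.integrable_comp_emb (MeasurableEquiv.measurableEmbedding _)).2 hgi
  rw [show (volume : Measure (ℝ × (Fin 2 → ℝ))) = volume.prod volume from rfl] at *
  have e3 := integral_prod_symm _ hgi'
  simp only [Function.comp] at e3
  rw [e3]
  have e2 : ∀ v : Fin 2 → ℝ, ∫ x, g ((MeasurableEquiv.piFinSuccAbove (fun _ : Fin 3 => ℝ) 2).symm (x, v))
      = ((4 ^ (((2 * m : ℕ):ℝ) + 1 / 2) * Kp (2 * m) : ℝ) : ℂ) *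
        ∏ i, (Ioi (0:ℝ)).indicator
          (fun t : ℝ => ((t ^ (s - 1) : ℝ) : ℂ) * cexp (-((![r₀, r₁] i) * t))) (v i) := by
    intro v
    have c0 : ∀ x : ℝ, (MeasurableEquiv.piFinSuccAbove (fun _ : Fin 3 => ℝ) 2).symm (x, v) 0 = v 0 :=
      fun x => rfl
    have c1 : ∀ x : ℝ, (MeasurableEquiv.piFinSuccAbove (fun _ : Fin 3 => ℝ) 2).symm (x, v) 1 = v 1 :=
      fun x => rfl
    have c2 : ∀ x : ℝ, (MeasurableEquiv.piFinSuccAbove (fun _ : Fin 3 => ℝ) 2).symm (x, v) 2 = x :=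
      fun x => rfl
    rw [Fin.prod_univ_two]
    simp only [Matrix.cons_val_zero, Matrix.cons_val_one]
    by_cases hv : 0 < v 0 ∧ 0 < v 1
    · obtain ⟨v0, v1⟩ := hv
      have e4 : ∀ x : ℝ, g ((MeasurableEquiv.piFinSuccAbove (fun _ : Fin 3 => ℝ) 2).symm (x, v))
          = ((prof (2 * m) (4 * v 0 * v 1) x : ℝ) : ℂ) * cexp (-(r₀ * v 0 + r₁ * v 1)) := by
        intro x
        rw [hg]
        by_cases hx : x ^ 2 < 4 * v 0 * v 1
        · rw [indicator_of_mem (by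
            refine ⟨?_, ?_, ?_⟩
            · rw [c0]; exact v0
            · rw [c1]; exact v1
            · rw [c0, c1, c2]; exact hx)]
          rw [Dq, c0, c1, c2, prof, if_pos hx]
        · rw [indicator_of_notMem (by
            rintro ⟨-, -, h⟩
            rw [c0, c1, c2] at h
            exact hx h)]
          rw [prof, if_neg hx]
          simp
      simp_rw [e4]
      rw [integral_mul_const, integral_complex_ofReal, prof_scale _ (by positivity),
        indicator_of_mem (mem_Ioi.2 v0), indicator_of_mem (mem_Ioi.2 v1),
        mul_assoc (4:ℝ), Real.mul_rpow (by norm_num) (by positivity), Real.mul_rpow v0.le v1.le]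
      have : ((2 * m : ℕ) : ℝ) + 1 / 2 = s - 1 := by rw [hs]; push_cast; ring
      rw [this, neg_add, Complex.exp_add]
      push_cast
      ring
    · have e4 : ∀ x : ℝ, g ((MeasurableEquiv.piFinSuccAbove (fun _ : Fin 3 => ℝ) 2).symm (x, v))
          = 0 := by
        intro x
        rw [hg]
        refine indicator_of_notMem ?_ _
        rintro ⟨h, h', -⟩
        rw [c0] at h
        rw [c1] at h'
        exact hv ⟨h, h'⟩
      simp_rw [e4]
      rw [integral_zero]
      by_cases hv0 : 0 < v 0
      · rw [indicator_of_notMem (s := Ioi (0:ℝ)) (a := v 1) (fun h => hv ⟨hv0, h⟩)]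
        simp
      · rw [indicator_of_notMem (s := Ioi (0:ℝ)) (a := v 0) (fun h => hv0 h)]
        simp
  simp_rw [e2]
  rw [integral_const_mul, integral_fintype_prod_volume_eq_prod (𝕜 := ℂ)
    (fun i => (Ioi (0:ℝ)).indicator
          (fun t : ℝ => ((t ^ (s - 1) : ℝ) : ℂ) * cexp (-((![r₀, r₁] i) * t))))]
  simp_rw [integral_indicator measurableSet_Ioi]
  rw [Fin.prod_univ_two]
  simp only [Matrix.cons_val_zero, Matrix.cons_val_one]
  rw [gamma_complex hs0 h0, gamma_complex hs0 h1, Cg]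
  push_cast
  ring

/-- the exponential family on the cone -/
def ev (m : ℕ) (p : ℂ × ℂ) (t : Fin 3 → ℝ) : ℂ :=
  ((Dq t ^ m : ℝ) : ℂ) *
    cexp (-I * ((starRingEnd ℂ) p.1 * t 0 + (starRingEnd ℂ) p.2 * t 1))

theorem ev_mul (m : ℕ) (p q : ℂ × ℂ) (t : Fin 3 → ℝ) :
    (starRingEnd ℂ) (ev m p t) * ev m q t = ((Dq t ^ (2 * m) : ℝ) : ℂ) *
      cexp (-((-I * (p.1 - (starRingEnd ℂ) q.1)) * t 0 + (-I * (p.2 - (starRingEnd ℂ) q.2)) * t 1)) := by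
  unfold ev
  rw [map_mul, Complex.conj_ofReal, ← Complex.exp_conj, mul_mul_mul_comm, ← Complex.exp_add,
    ← Complex.ofReal_mul, ← pow_add, ← two_mul]
  congr 2
  simp only [map_mul, map_neg, map_add, Complex.conj_I, Complex.conj_conj, Complex.conj_ofReal]
  ring

theorem ev_meas (m : ℕ) (p : ℂ × ℂ) : Measurable (ev m p) := by
  unfold ev Dq
  fun_prop

theorem ev_memLp (m : ℕ) {p : ℂ × ℂ} (hp : p ∈ UHP ×ˢ UHP) :
    MemLp (ev m p) 2 (volume.restrict Lam) := by
  rw [memLp_two_iff_integrable_sq_norm (ev_meas m p).aestronglyMeasurable]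
  have h := (gram_integrable (2 * m) (kf_re_pos hp.1 hp.1) (kf_re_pos hp.2 hp.2)).norm
  refine h.congr (Eventually.of_forall fun t => ?_)
  simp only
  rw [← ev_mul, norm_mul, RCLike.norm_conj, sq]

theorem ev_inner (m : ℕ) {p q : ℂ × ℂ} (hp : p ∈ UHP ×ˢ UHP) (hq : q ∈ UHP ×ˢ UHP) :
    ∫ t in Lam, (starRingEnd ℂ) (ev m p t) * ev m q t
      = (Cg m : ℂ) * kk (2 * m + 3 / 2) q p := by
  simp_rw [ev_mul]
  rw [gram_integral m (kf_re_pos hq.1 hp.1) (kf_re_pos hq.2 hp.2)]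
  rfl

end Gram
section Laplace

open Complex Filter Topology

/-- real pairing -/
def dotp (y t : Fin 3 → ℝ) : ℝ := y 0 * t 0 + y 1 * t 1 + y 2 * t 2

/-- complex pairing -/
def dotc (z : Fin 3 → ℂ) (t : Fin 3 → ℝ) : ℂ := z 0 * t 0 + z 1 * t 1 + z 2 * t 2

/-- shift of a point of the cone along the axis -/
def shf (y : Fin 3 → ℝ) (d : ℝ) : Fin 3 → ℝ := ![y 0 - d, y 1 - d, y 2]

theorem dotp_shf (y t : Fin 3 → ℝ) (d : ℝ) : dotp (shf y d) t = dotp y t - d * (t 0 + t 1) := by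
  simp [dotp, shf]
  ring

theorem dotp_nonneg {y t : Fin 3 → ℝ} (hy : y ∈ Sigma3) (ht : t ∈ Lam) : 0 ≤ dotp y t := by
  obtain ⟨h1, h0⟩ := hy
  obtain ⟨t0, t1, t2⟩ := ht
  have hy1 : 0 < y 1 := by
    by_contra h
    nlinarith [sq_nonneg (y 2)]
  have h2 : |y 2 * t 2| ≤ y 0 * t 0 + y 1 * t 1 := by
    refine abs_le_of_sq_le_sq ?_ (by positivity)
    have a1 : (y 2) ^ 2 * (t 2) ^ 2 ≤ (y 0 * y 1) * (4 * t 0 * t 1) :=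
      mul_le_mul (by linarith) t2.le (by positivity) (by positivity)
    nlinarith [sq_nonneg (y 0 * t 0 - y 1 * t 1)]
  have := (abs_le.1 h2).1
  unfold dotp
  linarith

theorem exists_shf {y : Fin 3 → ℝ} (hy : y ∈ Sigma3) : ∃ d, 0 < d ∧ shf y d ∈ Sigma3 := by
  have hc : Continuous (fun d : ℝ => (y 0 - d) * (y 1 - d) - (y 2) ^ 2) := by fun_prop
  have hc2 : Continuous (fun d : ℝ => y 0 - d) := by fun_prop
  have e1 : ∀ᶠ d in 𝓝 (0:ℝ), 0 < (y 0 - d) * (y 1 - d) - (y 2) ^ 2 :=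
    hc.continuousAt.eventually (lt_mem_nhds (by simpa using hy.1))
  have e2 : ∀ᶠ d in 𝓝 (0:ℝ), 0 < y 0 - d :=
    hc2.continuousAt.eventually (lt_mem_nhds (by simpa using hy.2))
  have e3 : ∀ᶠ d in 𝓝[>] (0:ℝ), 0 < d ∧ shf y d ∈ Sigma3 := by
    filter_upwards [nhdsWithin_le_nhds e1, nhdsWithin_le_nhds e2, self_mem_nhdsWithin] with d a b c
    refine ⟨c, ?_, ?_⟩
    · simpa [shf] using a
    · simpa [shf] using b
  exact e3.exists

theorem isOpen_TSigma : IsOpen TSigma := by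
  have h1 : IsOpen {z : Fin 3 → ℂ | 0 < (z 0).im * (z 1).im - ((z 2).im) ^ 2} :=
    isOpen_lt (by fun_prop) (by fun_prop)
  have h2 : IsOpen {z : Fin 3 → ℂ | 0 < (z 0).im} :=
    isOpen_lt (by fun_prop) (by fun_prop)
  exact h1.inter h2

/-- admissible densities -/
def Adm (f : (Fin 3 → ℝ) → ℂ) : Prop :=
  AEStronglyMeasurable f (volume.restrict Lam) ∧
    ∀ y ∈ Sigma3, IntegrableOn (fun t => ‖f t‖ * Real.exp (-dotp y t)) Lam

/-- Laplace transform over the cone -/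
def Lap (f : (Fin 3 → ℝ) → ℂ) (z : Fin 3 → ℂ) : ℂ := ∫ t in Lam, f t * cexp (I * dotc z t)

theorem dotp_meas (y : Fin 3 → ℝ) : Measurable (dotp y) := by
  unfold dotp; fun_prop

theorem dotc_meas (z : Fin 3 → ℂ) : Measurable (dotc z) := by
  unfold dotc; fun_prop

theorem norm_exp_dotc (z : Fin 3 → ℂ) (t : Fin 3 → ℝ) :
    ‖cexp (I * dotc z t)‖ = Real.exp (-dotp (fun i => (z i).im) t) := by
  rw [Complex.norm_exp]
  simp [dotc, dotp]

theorem Lap_meas {f : (Fin 3 → ℝ) → ℂ} (hf : Adm f) (z : Fin 3 → ℂ) :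
    AEStronglyMeasurable (fun t => f t * cexp (I * dotc z t)) (volume.restrict Lam) :=
  hf.1.mul ((dotc_meas z).const_mul I).cexp.aestronglyMeasurable

theorem Lap_int {f : (Fin 3 → ℝ) → ℂ} (hf : Adm f) {z : Fin 3 → ℂ} (hz : z ∈ TSigma) :
    IntegrableOn (fun t => f t * cexp (I * dotc z t)) Lam := by
  refine (hf.2 (fun i => (z i).im) hz).mono' (Lap_meas hf z) (Eventually.of_forall fun t => ?_)
  rw [norm_mul, norm_exp_dotc]

theorem Adm_of_bound {f g : (Fin 3 → ℝ) → ℂ} (hf : Adm f)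
    (hg : AEStronglyMeasurable g (volume.restrict Lam)) {C : ℝ} (hC : 0 ≤ C)
    (h : ∀ t ∈ Lam, ‖g t‖ ≤ C * (t 0 + t 1) * ‖f t‖) : Adm g := by
  refine ⟨hg, fun y hy => ?_⟩
  obtain ⟨d, hd, hyd⟩ := exists_shf hy
  refine ((hf.2 _ hyd).const_mul (C / d)).mono' ?_ ?_
  · exact hg.norm.mul (dotp_meas y).neg.exp.aestronglyMeasurable
  · filter_upwards [ae_restrict_mem measurableSet_Lam] with t ht
    have hb := h t ht
    have hu : 0 < t 0 + t 1 := add_pos ht.1 ht.2.1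
    rw [Real.norm_of_nonneg (by positivity), dotp_shf, neg_sub, sub_eq_add_neg, Real.exp_add]
    have he : d * (t 0 + t 1) ≤ Real.exp (d * (t 0 + t 1)) := by
      linarith [Real.add_one_le_exp (d * (t 0 + t 1))]
    calc ‖g t‖ * Real.exp (-dotp y t)
        ≤ (C * (t 0 + t 1) * ‖f t‖) * Real.exp (-dotp y t) := by gcongr
      _ = C / d * (‖f t‖ * ((d * (t 0 + t 1)) * Real.exp (-dotp y t))) := by field_simp
      _ ≤ _ := by gcongr

theorem Lam_coord {t : Fin 3 → ℝ} (ht : t ∈ Lam) (j : Fin 3) : |t j| ≤ t 0 + t 1 := by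
  have h := Lam_abs ht
  obtain ⟨h0, h1, h2⟩ := ht
  fin_cases j
  · simp [abs_of_pos h0, h1.le]
  · simp [abs_of_pos h1, h0.le]
  · exact h

theorem Adm_coord {f : (Fin 3 → ℝ) → ℂ} (hf : Adm f) (j : Fin 3) :
    Adm (fun t => I * t j * f t) := by
  refine Adm_of_bound hf (C := 1) ?_ zero_le_one ?_
  · refine AEStronglyMeasurable.mul (Measurable.aestronglyMeasurable (by fun_prop)) hf.1
  · intro t ht
    rw [norm_mul, norm_mul, Complex.norm_I, one_mul, one_mul, Complex.norm_real]
    exact mul_le_mul_of_nonneg_right (Lam_coord ht j) (norm_nonneg _)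

/-- the linear functional attached to a point -/
def Lt (t : Fin 3 → ℝ) : (Fin 3 → ℂ) →L[ℂ] ℂ :=
  ∑ j, (t j : ℂ) • ContinuousLinearMap.proj (R := ℂ) (φ := fun _ : Fin 3 => ℂ) j

theorem Lt_apply (t : Fin 3 → ℝ) (z : Fin 3 → ℂ) : Lt t z = dotc z t := by
  simp [Lt, dotc, Fin.sum_univ_three, mul_comm]

theorem Lt_single (t : Fin 3 → ℝ) (j : Fin 3) : Lt t (Pi.single j 1) = t j := by
  rw [Lt_apply]
  fin_cases j <;> simp [dotc]

theorem Lt_cont : Continuous Lt := by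
  unfold Lt
  fun_prop

theorem Lt_norm {t : Fin 3 → ℝ} (ht : t ∈ Lam) : ‖Lt t‖ ≤ 3 * (t 0 + t 1) := by
  refine ContinuousLinearMap.opNorm_le_bound _ (by linarith [ht.1, ht.2.1]) fun z => ?_
  rw [Lt_apply, dotc]
  have hj : ∀ j : Fin 3, ‖z j * (t j : ℂ)‖ ≤ ‖z‖ * (t 0 + t 1) := by
    intro j
    rw [norm_mul, Complex.norm_real]
    exact mul_le_mul (norm_le_pi_norm z j) (Lam_coord ht j) (norm_nonneg _) (norm_nonneg _)
  have h1 := norm_add_le (z 0 * (t 0 : ℂ) + z 1 * t 1) (z 2 * t 2)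
  have h2 := norm_add_le (z 0 * (t 0 : ℂ)) (z 1 * t 1)
  linarith [hj 0, hj 1, hj 2]

theorem Lap_hasFDerivAt {f : (Fin 3 → ℝ) → ℂ} (hf : Adm f) {z : Fin 3 → ℂ} (hz : z ∈ TSigma) :
    DifferentiableAt ℂ (Lap f) z ∧ ∀ j, pd j (Lap f) z = Lap (fun t => I * t j * f t) z := by
  obtain ⟨d, hd, hyd⟩ := exists_shf (y := fun i => (z i).im) hz
  have hu : Adm (fun t => ((3 * (t 0 + t 1) : ℝ) : ℂ) * f t) := by
    refine Adm_of_bound hf (C := 3) ?_ (by norm_num) ?_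
    · refine AEStronglyMeasurable.mul (Measurable.aestronglyMeasurable (by fun_prop)) hf.1
    · intro t ht
      have : 0 < t 0 + t 1 := add_pos ht.1 ht.2.1
      rw [norm_mul, Complex.norm_real, Real.norm_of_nonneg (by positivity)]
  have hball : ∀ x ∈ Metric.ball z (d / 2), ∀ t ∈ Lam,
      dotp (shf (fun i => (z i).im) d) t ≤ dotp (fun i => (x i).im) t := by
    intro x hx t ht
    rw [Metric.mem_ball, dist_eq_norm] at hx
    have hj : ∀ j : Fin 3, ((z j).im - (x j).im) * t j ≤ d / 2 * |t j| := by
      intro j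
      have a1 : |(x j).im - (z j).im| ≤ d / 2 := by
        have := (Complex.abs_im_le_norm (x j - z j)).trans (norm_le_pi_norm (x - z) j)
        rw [Complex.sub_im] at this
        linarith
      calc ((z j).im - (x j).im) * t j ≤ |((z j).im - (x j).im) * t j| := le_abs_self _
        _ = |(x j).im - (z j).im| * |t j| := by rw [abs_mul, abs_sub_comm]
        _ ≤ _ := by gcongr
    have h0 := hj 0
    have h1 := hj 1
    have h2 := hj 2
    have h3 := Lam_abs ht
    rw [abs_of_pos ht.1] at h0
    rw [abs_of_pos ht.2.1] at h1
    rw [dotp_shf, dotp, dotp]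
    nlinarith
  have hbd : ∀ x ∈ Metric.ball z (d / 2), ∀ t ∈ Lam,
      ‖(f t * cexp (I * dotc x t) * I) • Lt t‖
        ≤ ‖((3 * (t 0 + t 1) : ℝ) : ℂ) * f t‖ * Real.exp (-dotp (shf (fun i => (z i).im) d) t) := by
    intro x hx t ht
    have hu : 0 < t 0 + t 1 := add_pos ht.1 ht.2.1
    rw [norm_smul, norm_mul, norm_mul, norm_mul, Complex.norm_I, mul_one, norm_exp_dotc,
      Complex.norm_real, Real.norm_of_nonneg (by positivity)]
    have := Lt_norm ht
    have h2 : Real.exp (-dotp (fun i => (x i).im) t)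
        ≤ Real.exp (-dotp (shf (fun i => (z i).im) d) t) := by
      rw [Real.exp_le_exp]; linarith [hball x hx t ht]
    calc ‖f t‖ * Real.exp (-dotp (fun i => (x i).im) t) * ‖Lt t‖
        ≤ ‖f t‖ * Real.exp (-dotp (shf (fun i => (z i).im) d) t) * (3 * (t 0 + t 1)) := by gcongr
      _ = _ := by ring
  have hm : AEStronglyMeasurable (fun t => (f t * cexp (I * dotc z t) * I) • Lt t)
      (volume.restrict Lam) :=
    ((Lap_meas hf z).mul_const I).smul Lt_cont.aestronglyMeasurable
  have key := hasFDerivAt_integral_of_dominated_of_fderiv_le (𝕜 := ℂ) (μ := volume.restrict Lam)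
    (F := fun (x : Fin 3 → ℂ) (t : Fin 3 → ℝ) => f t * cexp (I * dotc x t))
    (F' := fun (x : Fin 3 → ℂ) (t : Fin 3 → ℝ) => (f t * cexp (I * dotc x t) * I) • Lt t)
    (x₀ := z) (s := Metric.ball z (d / 2))
    (bound := fun t => ‖((3 * (t 0 + t 1) : ℝ) : ℂ) * f t‖ *
      Real.exp (-dotp (shf (fun i => (z i).im) d) t))
    (Metric.ball_mem_nhds _ (by linarith))
    (Eventually.of_forall fun x => Lap_meas hf x) (Lap_int hf hz) hm
    (by
      filter_upwards [ae_restrict_mem measurableSet_Lam] with t ht x hx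
      exact hbd x hx t ht)
    (hu.2 _ hyd)
    (by
      refine Eventually.of_forall fun t x hx => ?_
      have h1 : HasFDerivAt (fun x => dotc x t) (Lt t) x := by
        have : (fun x => dotc x t) = Lt t := by ext x; rw [Lt_apply]
        rw [this]
        exact (Lt t).hasFDerivAt
      have h2 := ((h1.const_mul I).cexp).const_mul (f t)
      have h3 : f t • cexp (I * dotc x t) • I • Lt t = (f t * cexp (I * dotc x t) * I) • Lt t := by
        rw [smul_smul, smul_smul]
      rw [← h3]
      exact h2)
  have hintg : Integrable (fun t => (f t * cexp (I * dotc z t) * I) • Lt t)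
      (volume.restrict Lam) := by
    refine (hu.2 _ hyd).mono' hm ?_
    filter_upwards [ae_restrict_mem measurableSet_Lam] with t ht
    exact hbd z (Metric.mem_ball_self (by linarith)) t ht
  refine ⟨key.differentiableAt, fun j => ?_⟩
  have h3 : fderiv ℂ (Lap f) z = _ := key.fderiv
  rw [pd, h3, ContinuousLinearMap.integral_apply hintg, Lap]
  refine integral_congr_ae (Eventually.of_forall fun t => ?_)
  simp only [_root_.smul_apply, Lt_single, smul_eq_mul]
  ring

theorem pd_congr {F G : (Fin 3 → ℂ) → ℂ} (h : EqOn F G TSigma) (j : Fin 3) :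
    EqOn (pd j F) (pd j G) TSigma := by
  intro z hz
  have : F =ᶠ[𝓝 z] G := Filter.eventuallyEq_of_mem (isOpen_TSigma.mem_nhds hz) h
  rw [pd, pd, this.fderiv_eq]

theorem pd_Lap {f : (Fin 3 → ℝ) → ℂ} (hf : Adm f) (j : Fin 3) :
    EqOn (pd j (Lap f)) (Lap (fun t => I * t j * f t)) TSigma :=
  fun _ hz => (Lap_hasFDerivAt hf hz).2 j

theorem Adm_Dq {f : (Fin 3 → ℝ) → ℂ} (hf : Adm f) : Adm (fun t => (Dq t : ℂ) * f t) := by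
  have h1 := Adm_coord (Adm_coord hf 1) 0
  have h2 := Adm_coord (Adm_coord hf 2) 2
  have hm : AEStronglyMeasurable (fun t => (Dq t : ℂ) * f t) (volume.restrict Lam) := by
    refine AEStronglyMeasurable.mul (Measurable.aestronglyMeasurable ?_) hf.1
    unfold Dq
    fun_prop
  refine ⟨hm, fun y hy => ?_⟩
  refine (((h1.2 y hy).const_mul 4).add (h2.2 y hy)).mono'
    (hm.norm.mul (dotp_meas y).neg.exp.aestronglyMeasurable) (Eventually.of_forall fun t => ?_)
  rw [Real.norm_of_nonneg (by positivity)]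
  simp only [Pi.add_apply]
  rw [← mul_assoc, ← add_mul]
  gcongr
  have e : (Dq t : ℂ) * f t = -4 * (I * t 0 * (I * t 1 * f t)) + (I * t 2 * (I * t 2 * f t)) := by
    unfold Dq
    push_cast
    linear_combination (4 * (t 0 : ℂ) * t 1 * f t - (t 2 : ℂ) ^ 2 * f t) * I_sq
  rw [e]
  refine (norm_add_le _ _).trans ?_
  rw [norm_mul]
  simp

theorem BoxS_Lap {f : (Fin 3 → ℝ) → ℂ} (hf : Adm f) {F : (Fin 3 → ℂ) → ℂ}
    (hF : EqOn F (Lap f) TSigma) :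
    EqOn (BoxS F) (Lap (fun t => (Dq t : ℂ) * f t)) TSigma := by
  intro z hz
  have a1 := (pd_congr ((pd_congr hF 1).trans (pd_Lap hf 1)) 0).trans (pd_Lap (Adm_coord hf 1) 0)
  have a2 := (pd_congr ((pd_congr hF 2).trans (pd_Lap hf 2)) 2).trans (pd_Lap (Adm_coord hf 2) 2)
  rw [BoxS, a1 hz, a2 hz, Lap, Lap, Lap, ← integral_const_mul, ← integral_add]
  · refine integral_congr_ae (Eventually.of_forall fun t => ?_)
    simp only [Dq]
    push_cast
    linear_combination (- (4 * (t 0 : ℂ) * t 1 * f t - (t 2 : ℂ) ^ 2 * f t)) *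
      cexp (I * dotc z t) * I_sq
  · exact (Lap_int (Adm_coord (Adm_coord hf 1) 0) hz).const_mul _
  · exact Lap_int (Adm_coord (Adm_coord hf 2) 2) hz

theorem BoxS_iter {f : (Fin 3 → ℝ) → ℂ} (hf : Adm f) (m : ℕ) :
    Adm (fun t => ((Dq t ^ m : ℝ) : ℂ) * f t) ∧
    EqOn (BoxS^[m] (Lap f)) (Lap (fun t => ((Dq t ^ m : ℝ) : ℂ) * f t)) TSigma := by
  induction m with
  | zero => simpa using ⟨hf, fun z _ => rfl⟩
  | succ m ih =>
    have e : (fun t => ((Dq t ^ (m + 1) : ℝ) : ℂ) * f t)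
        = (fun t => (Dq t : ℂ) * (((Dq t ^ m : ℝ) : ℂ) * f t)) := by
      ext t
      push_cast
      ring
    rw [Function.iterate_succ_apply', e]
    exact ⟨Adm_Dq ih.1, BoxS_Lap ih.1 ih.2⟩

theorem exp_memLp {y : Fin 3 → ℝ} (hy : y ∈ Sigma3) :
    MemLp (fun t => Real.exp (-dotp y t)) 2 (volume.restrict Lam) := by
  obtain ⟨d, hd, hyd⟩ := exists_shf hy
  have hm : Measurable (fun t => Real.exp (-dotp y t)) := (dotp_meas y).neg.exp
  rw [memLp_two_iff_integrable_sq_norm hm.aestronglyMeasurable]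
  refine (cone_int 0 (c := 2 * d) (by positivity)).mono' (hm.norm.pow_const 2).aestronglyMeasurable ?_
  filter_upwards [ae_restrict_mem measurableSet_Lam] with t ht
  have := dotp_nonneg hyd ht
  rw [dotp_shf] at this
  rw [Real.norm_of_nonneg (by positivity), Real.norm_of_nonneg (by positivity), ← Real.exp_nat_mul,
    pow_zero, one_mul, Real.exp_le_exp]
  push_cast
  nlinarith

theorem Adm_of_memLp {f : (Fin 3 → ℝ) → ℂ} (hf : MemLp f 2 (volume.restrict Lam)) : Adm f :=
  ⟨hf.1, fun _ hy => hf.norm.integrable_mul (exp_memLp hy)⟩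

theorem BoxS_at {f : (Fin 3 → ℝ) → ℂ} (hf : Adm f) (m : ℕ) {p : ℂ × ℂ} (hp : p ∈ UHP ×ˢ UHP) :
    BoxS^[m] (Lap f) ![p.1, p.2, 0] = ∫ t in Lam, (starRingEnd ℂ) (ev m p t) * f t := by
  have hz : ![p.1, p.2, 0] ∈ TSigma := by
    have h1 : 0 < p.1.im := hp.1
    have h2 : 0 < p.2.im := hp.2
    refine ⟨?_, ?_⟩
    · simp; positivity
    · simpa using h1
  rw [(BoxS_iter hf m).2 hz, Lap]
  refine integral_congr_ae (Eventually.of_forall fun t => ?_)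
  simp only [ev, map_mul, Complex.conj_ofReal, ← Complex.exp_conj, map_neg, map_add,
    Complex.conj_I, Complex.conj_conj, neg_neg]
  have : dotc ![p.1, p.2, 0] t = p.1 * t 0 + p.2 * t 1 := by simp [dotc]
  rw [this]
  ring

end Laplace
section HardyNorm

open Complex Filter Topology FourierTransform

/-- scaling constant -/
def C0 : ℝ≥0∞ := ENNReal.ofReal |((-(1 / (2 * Real.pi))) ^ 3)⁻¹|

theorem hardy_slice {f : (Fin 3 → ℝ) → ℂ} (hf : MemLp f 2 (volume.restrict Lam))
    {y : Fin 3 → ℝ} (hy : y ∈ Sigma3) :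
    ∫⁻ x : Fin 3 → ℝ, (‖Lap f (fun i => (x i : ℂ) + (y i : ℂ) * I)‖₊ : ℝ≥0∞) ^ 2
      = C0 * ∫⁻ t in Lam, (‖f t‖ₑ) ^ 2 * ENNReal.ofReal (Real.exp (-(2 * dotp y t))) := by
  have hA := Adm_of_memLp hf
  set ψ : (Fin 3 → ℝ) → ℂ := Lam.indicator fun t => f t * (Real.exp (-dotp y t) : ℂ) with hψ
  have hmψ : AEStronglyMeasurable (fun t => f t * (Real.exp (-dotp y t) : ℂ))
      (volume.restrict Lam) := by
    refine hf.1.mul (Measurable.aestronglyMeasurable ?_)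
    exact Complex.measurable_ofReal.comp (dotp_meas y).neg.exp
  have hψ1 : Integrable ψ := by
    refine (integrable_indicator_iff measurableSet_Lam).2 ?_
    refine (hA.2 y hy).mono' hmψ (Eventually.of_forall fun t => ?_)
    rw [norm_mul, Complex.norm_real, Real.norm_of_nonneg (Real.exp_pos _).le]
  have hψ2 : MemLp ψ 2 := by
    refine (memLp_indicator_iff_restrict measurableSet_Lam).2 ?_
    refine hf.mono hmψ ?_
    filter_upwards [ae_restrict_mem measurableSet_Lam] with t ht
    rw [norm_mul, Complex.norm_real, Real.norm_of_nonneg (Real.exp_pos _).le]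
    refine mul_le_of_le_one_right (norm_nonneg _) ?_
    rw [Real.exp_le_one_iff]
    linarith [dotp_nonneg hy ht]
  have hmp := PiLp.volume_preserving_ofLp (Fin 3)
  have hme : MeasurableEmbedding (WithLp.ofLp : EuclideanSpace ℝ (Fin 3) → (Fin 3 → ℝ)) :=
    (MeasurableEquiv.toLp 2 (Fin 3 → ℝ)).symm.measurableEmbedding
  set φ : EuclideanSpace ℝ (Fin 3) → ℂ := fun v => ψ (WithLp.ofLp v) with hφ
  have hφ1 : Integrable φ := (hmp.integrable_comp_emb hme).2 hψ1
  have hφ2 : MemLp φ 2 := hψ2.comp_measurePreserving hmp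
  have hP := plancherel_L1_L2 φ hφ1 hφ2
  have hR : ∫⁻ v, ‖φ v‖ₑ ^ 2
      = ∫⁻ t in Lam, (‖f t‖ₑ) ^ 2 * ENNReal.ofReal (Real.exp (-(2 * dotp y t))) := by
    rw [hφ, hmp.lintegral_comp_emb hme (fun t => ‖ψ t‖ₑ ^ 2), ← lintegral_indicator measurableSet_Lam]
    refine lintegral_congr fun t => ?_
    rw [hψ]
    by_cases ht : t ∈ Lam
    · rw [indicator_of_mem ht, indicator_of_mem ht, enorm_mul, mul_pow]
      congr 1
      rw [← ofReal_norm, Complex.norm_real, Real.norm_of_nonneg (Real.exp_pos _).le,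
        ← ENNReal.ofReal_pow (Real.exp_pos _).le, ← Real.exp_nat_mul]
      congr 2
      push_cast
      ring
    · rw [indicator_of_notMem ht, indicator_of_notMem ht]
      simp
  have hF : ∀ x : Fin 3 → ℝ, Lap f (fun i => (x i : ℂ) + (y i : ℂ) * I)
      = 𝓕 φ (WithLp.toLp 2 ((-(1 / (2 * Real.pi))) • x)) := by
    intro x
    rw [Real.fourier_eq', Lap, ← integral_indicator measurableSet_Lam, ← hmp.integral_comp hme]
    refine integral_congr_ae (Eventually.of_forall fun v => ?_)
    simp only [hφ, hψ]
    by_cases ht : WithLp.ofLp v ∈ Lam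
    · rw [indicator_of_mem ht, indicator_of_mem ht, smul_eq_mul]
      rw [mul_comm (cexp _), mul_assoc, Complex.ofReal_exp, ← Complex.exp_add]
      congr 2
      have : inner ℝ v (WithLp.toLp 2 ((-(1 / (2 * Real.pi))) • x))
          = -(1 / (2 * Real.pi)) * dotp x (WithLp.ofLp v) := by
        simp [PiLp.inner_apply, Fin.sum_univ_three, dotp]
        ring
      rw [this]
      have e : -2 * Real.pi * (-(1 / (2 * Real.pi)) * dotp x (WithLp.ofLp v))
          = dotp x (WithLp.ofLp v) := by
        have := Real.pi_pos
        field_simp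
      rw [e]
      simp only [dotc, dotp]
      push_cast
      linear_combination ((y 0 : ℂ) * v.ofLp 0 + (y 1 : ℂ) * v.ofLp 1 + (y 2 : ℂ) * v.ofLp 2) * I_sq
    · rw [indicator_of_notMem ht, indicator_of_notMem ht, smul_zero]
  have hc : (-(1 / (2 * Real.pi))) ≠ 0 := by
    have := Real.pi_pos
    simp [Real.pi_ne_zero]
  have hL : ∫⁻ x : Fin 3 → ℝ, ‖𝓕 φ (WithLp.toLp 2 ((-(1 / (2 * Real.pi))) • x))‖ₑ ^ 2
      = C0 * ∫⁻ ξ, ‖𝓕 φ ξ‖ₑ ^ 2 := by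
    have h1 := (Homeomorph.smulOfNeZero (-(1 / (2 * Real.pi))) hc (α := Fin 3 → ℝ)).measurableEmbedding.lintegral_map
      (μ := volume) (fun x => ‖𝓕 φ (WithLp.toLp 2 x)‖ₑ ^ 2)
    simp only [Homeomorph.smulOfNeZero_apply] at h1
    rw [← h1]
    have h2 := Measure.map_addHaar_smul (volume : Measure (Fin 3 → ℝ)) hc
    rw [h2]
    rw [lintegral_smul_measure, ← hmp.lintegral_comp_emb hme]
    simp [C0]
  rw [← hR, ← hP, ← hL]
  refine lintegral_congr fun x => ?_
  rw [hF]
  rfl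

theorem hardy_norm {f : (Fin 3 → ℝ) → ℂ} (hf : MemLp f 2 (volume.restrict Lam)) :
    hardyNormSqSigma (Lap f) = C0 * ∫⁻ t in Lam, (‖f t‖ₑ) ^ 2 := by
  refine le_antisymm ?_ ?_
  · refine iSup₂_le fun y hy => ?_
    rw [hardy_slice hf hy]
    gcongr 1
    refine setLIntegral_mono' measurableSet_Lam fun t ht => ?_
    refine mul_le_of_le_one_right' ?_
    rw [ENNReal.ofReal_le_one, Real.exp_le_one_iff]
    linarith [dotp_nonneg hy ht]
  · set yn : ℕ → (Fin 3 → ℝ) := fun n => ![1 / ((n:ℝ) + 1), 1 / ((n:ℝ) + 1), 0] with hyn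
    have hy : ∀ n, yn n ∈ Sigma3 := by
      intro n
      have : (0:ℝ) < 1 / ((n:ℝ) + 1) := by positivity
      refine ⟨?_, ?_⟩
      · simp [hyn]; positivity
      · simpa [hyn] using this
    have hdot : ∀ n t, dotp (yn n) t = 1 / ((n:ℝ) + 1) * (t 0 + t 1) := by
      intro n t
      simp [hyn, dotp]
      ring
    have ht : Tendsto (fun n => ∫⁻ t in Lam, (‖f t‖ₑ) ^ 2 *
        ENNReal.ofReal (Real.exp (-(2 * dotp (yn n) t)))) atTop (𝓝 (∫⁻ t in Lam, (‖f t‖ₑ) ^ 2)) := by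
      refine lintegral_tendsto_of_tendsto_of_monotone ?_ ?_ ?_
      · intro n
        refine (hf.1.enorm.pow_const 2).mul ?_
        exact ((dotp_meas (yn n)).const_mul 2).neg.exp.ennreal_ofReal.aemeasurable
      · filter_upwards [ae_restrict_mem measurableSet_Lam] with t ht
        intro a b hab
        have hu : 0 < t 0 + t 1 := add_pos ht.1 ht.2.1
        simp only
        rw [hdot, hdot]
        gcongr
      · refine Eventually.of_forall fun t => ?_
        have h1 : Tendsto (fun n : ℕ => Real.exp (-(2 * (1 / ((n:ℝ) + 1) * (t 0 + t 1))))) atTop (𝓝 1) := by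
          have h := (tendsto_one_div_add_atTop_nhds_zero_nat (𝕜 := ℝ)).mul_const (t 0 + t 1)
          have h' := (Real.continuous_exp.tendsto _).comp (h.const_mul 2).neg
          simpa [Function.comp_def] using h'
        have h2 := ENNReal.Tendsto.const_mul (a := ‖f t‖ₑ ^ 2) (ENNReal.tendsto_ofReal h1)
          (Or.inr (by simp))
        simp_rw [hdot]
        simpa using h2
    refine le_of_tendsto' (ENNReal.Tendsto.const_mul (a := C0) ht (Or.inr (by simp [C0]))) fun n => ?_
    rw [← hardy_slice hf (hy n)]
    exact le_iSup₂ (f := fun y (_ : y ∈ Sigma3) => ∫⁻ x : Fin 3 → ℝ,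
      (‖Lap f (fun i => (x i : ℂ) + (y i : ℂ) * Complex.I)‖₊ : ℝ≥0∞) ^ 2) (yn n) (hy n)

end HardyNorm
/-- there is `c_m > 0` such that every `G ∈ A²_{(2m−1/2,2m−1/2)}(Π⁺×Π⁺)`
is of the form `G(z₁,z₂) = (□^m F)(z₁,z₂,0)` for some `F ∈ H²(T_Σ)` with
`‖F‖²_{H²(T_Σ)} = c_m ‖G‖²`. -/
theorem extension_from_bergman_prod_to_hardy (m : ℕ) :
    ∃ c : ℝ, 0 < c ∧
      ∀ G : ℂ × ℂ → ℂ, DifferentiableOn ℂ G (UHP ×ˢ UHP) →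
        bergNormSqProd (2 * m - 1 / 2) (2 * m - 1 / 2) G < ⊤ →
        ∃ F : (Fin 3 → ℂ) → ℂ, DifferentiableOn ℂ F TSigma ∧ hardyNormSqSigma F < ⊤ ∧
          (∀ p ∈ UHP ×ˢ UHP, BoxS^[m] F ![(p : ℂ × ℂ).1, p.2, 0] = G p) ∧
          hardyNormSqSigma F =
            ENNReal.ofReal c * bergNormSqProd (2 * m - 1 / 2) (2 * m - 1 / 2) G := by
  set α : ℝ := 2 * m - 1 / 2 with hαd
  have hα : -1 / 2 ≤ α := by
    have : (0:ℝ) ≤ m := Nat.cast_nonneg m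
    rw [hαd]; linarith
  have hs : α + 2 = 2 * m + 3 / 2 := by rw [hαd]; ring
  have hCr := Cr_pos hα
  have hCg := Cg_pos m
  set κ : ℝ := Cg m / Cr α ^ 2 with hκd
  have hκ : 0 < κ := by positivity
  have hC0 : (0:ℝ) < C0.toReal := by
    refine ENNReal.toReal_pos ?_ (by simp [C0])
    have := Real.pi_pos
    simp only [C0, ne_eq, ENNReal.ofReal_eq_zero, not_le, abs_pos]
    exact inv_ne_zero (pow_ne_zero _ (neg_ne_zero.2 (by positivity)))
  have hC0t : C0 ≠ ⊤ := by simp [C0]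
  refine ⟨C0.toReal * (κ / Cg m ^ 2), by positivity, fun G hd hfin => ?_⟩
  have hG : MemLp G 2 ((Vm α).prod (Vm α)) := by
    refine ⟨aesm_of_diff α hd, ?_⟩
    rw [eLpNorm_lt_top_iff_lintegral_rpow_enorm_lt_top (by norm_num) (by norm_num)]
    simpa [bergNormSqProd, enorm] using hfin
  -- transfer to the Hilbert space on the cone
  obtain ⟨f, hf1, hf2⟩ := hilbert_transfer
    (fun p : (UHP ×ˢ UHP : Set (ℂ × ℂ)) => (ev_memLp m p.2).toLp (ev m p)) (kLp hα) κ hκ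
    (by
      intro p q
      rw [inner_toLp, ev_inner m p.2 q.2, kLp, kLp, inner_toLp,
        repro_two hα p.2 (kk_diff _ q.2) (kk_memLp hα q.2), hs, hκd]
      have hCrc : (Cr α : ℂ) ≠ 0 := by exact_mod_cast hCr.ne'
      push_cast
      field_simp)
    (hG.toLp G) (G_mem_closure hα hd hG)
  have hfm := Lp.memLp f
  set g : (Fin 3 → ℝ) → ℂ := fun t => ((1 / Cg m : ℝ) : ℂ) * f t with hgd
  have hg : MemLp g 2 (volume.restrict Lam) := hfm.const_mul _
  have hA := Adm_of_memLp hg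
  have hnorm : hardyNormSqSigma (Lap g) =
      ENNReal.ofReal (C0.toReal * (κ / Cg m ^ 2)) * bergNormSqProd α α G := by
    have e1 : ∀ {X : Type} [MeasurableSpace X] {μ : Measure X} (h : Lp ℂ 2 μ),
        ∫⁻ t, ‖h t‖ₑ ^ 2 ∂μ = ENNReal.ofReal (‖h‖ ^ 2) := by
      intro X _ μ h
      have h2 := eLpNorm_nnreal_pow_eq_lintegral (f := h) (μ := μ) (p := 2) (by norm_num)
      rw [ENNReal.ofReal_pow (norm_nonneg _), ofReal_norm, Lp.enorm_def]
      have h3 : (((2 : ℝ≥0) : ℝ)) = ((2 : ℕ) : ℝ) := by norm_num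
      simp only [h3, ENNReal.rpow_natCast] at h2
      exact h2.symm
    have e2 : bergNormSqProd α α G = ENNReal.ofReal (‖hG.toLp G‖ ^ 2) := by
      rw [← e1, bergNormSqProd]
      refine lintegral_congr_ae ?_
      filter_upwards [hG.coeFn_toLp] with z hz
      rw [hz]
      rfl
    have e3 : ∫⁻ t in Lam, ‖g t‖ₑ ^ 2 = ENNReal.ofReal ((1 / Cg m) ^ 2) * ENNReal.ofReal (‖f‖ ^ 2) := by
      rw [← e1, ← lintegral_const_mul' _ _ (by simp)]
      refine lintegral_congr fun t => ?_
      rw [hgd]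
      simp only
      rw [enorm_mul, mul_pow, ← ofReal_norm (((1 / Cg m : ℝ) : ℂ)), Complex.norm_real,
        Real.norm_of_nonneg (by positivity), ENNReal.ofReal_pow (by positivity)]
    rw [hardy_norm hg, e3, e2, hf1, ← ENNReal.ofReal_mul (by positivity),
      ← ENNReal.ofReal_mul (by positivity)]
    nth_rewrite 1 [← ENNReal.ofReal_toReal hC0t]
    rw [← ENNReal.ofReal_mul (by positivity)]
    congr 1
    field_simp
  refine ⟨Lap g, fun z hz => (Lap_hasFDerivAt hA hz).1.differentiableWithinAt, ?_, ?_, hnorm⟩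
  · rw [hnorm]
    exact ENNReal.mul_lt_top ENNReal.ofReal_lt_top hfin
  · intro p hp
    rw [BoxS_at hA m hp]
    have h2 := hf2 ⟨p, hp⟩
    have e4 : inner ℂ ((ev_memLp m hp).toLp (ev m p)) f
        = ∫ t in Lam, (starRingEnd ℂ) (ev m p t) * f t := by
      conv_lhs => rw [← Lp.toLp_coeFn f hfm]
      exact inner_toLp _ _
    have e5 : inner ℂ (kLp hα ⟨p, hp⟩) (hG.toLp G) = ((Cr α ^ 2 : ℝ) : ℂ) * G p := by
      rw [kLp, inner_toLp, repro_two hα hp hd hG]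
    rw [e5] at h2
    simp only at h2
    rw [e4] at h2
    have e6 : ∫ t in Lam, (starRingEnd ℂ) (ev m p t) * g t
        = ((1 / Cg m : ℝ) : ℂ) * ∫ t in Lam, (starRingEnd ℂ) (ev m p t) * f t := by
      rw [← integral_const_mul]
      refine integral_congr_ae (Filter.Eventually.of_forall fun t => ?_)
      simp only [hgd]
      ring
    rw [e6, h2, hκd]
    have hCgc : (Cg m : ℂ) ≠ 0 := by exact_mod_cast hCg.ne'
    have hCrc : (Cr α : ℂ) ≠ 0 := by exact_mod_cast hCr.ne'
    push_cast
    field_simp
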